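/- arXiv:2301.13590 — 3 statements merged into one kernel-verified Lean document; each statement's English description precedes it below -/
import Mathlib

section
/- (Iteration theorem on regularity.) Let n ∈ ℕ⁺, ε > 0, r_ν := ε 2^{−ν} for ν ∈ ℕ, and let f : ℝⁿ → ℝ be the limit of a sequence of real analytic functions f_ν defined (holomorphically) on the complex strips |Im x| ≤ r_ν in ℂⁿ, such that f₀ = 0 and |f_ν(x) − f_{ν−1}(x)| ≤ φ(r_ν) on the strip |Im x| ≤ r_ν for all ν ≥ 1, where φ is a nondecreasing continuous function with φ(0) = 0. Assume there is a critical k_* ∈ ℕ such that ∫₀¹ φ(x)/x^{k_*+1} dx < ∞ and ∫₀¹ φ(x)/x^{k_*+2} dx = ∞. Then there exists a modulus of continuity ϖ_* such that f ∈ C_{k_*,ϖ_*}(ℝⁿ); in particular ϖ_* can be chosen so that ϖ_*(γ) ∼ γ ∫_{L(γ)}^{ε} φ(t)/t^{k_*+2} dt, with this quantity comparable (bounded above and below by positive constant multiples) to ∫₀^{L(γ)} φ(t)/t^{k_*+1} dt as γ → 0⁺, for some function L(γ) → 0⁺. -/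
/-!
The limit is the telescoping series `f = ∑_ν (F_{ν+1} - F_ν)`, since `F_0 = 0`.

The difference `F_{ν+1} - F_ν` is holomorphic and bounded by `φ(r)` on the strip of width
`r = r_{ν+1} = ε / 2^(ν+1)`, so Cauchy's estimates (`exists_cauchy_const_re`) bound its derivatives
of order `m` on `ℝⁿ` by `C φ(r) / r^m`. They are obtained by induction on `m`, halving the strip:
the complex derivative of a bounded holomorphic function is again bounded
(`norm_fderiv_le_of_strip`) and holomorphic (`differentiableOn_fderiv_strip`) on the half strip.

The modulus is `ϖ_*(γ) = ∫₀^ε φ(t) t^{-k-1} min(1, γ/t) dt` (`critMod`). For a derivative of order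
`p ≤ k`, the bounds of order `p` and `p + 1` estimate the increment of a single term over a distance
`γ` by a constant times `φ(r) r^{-k} min(1, γ/r)`. As `φ` is monotone, this is at most a constant
times the part over `(r, 2r]` of the integral defining `ϖ_*(γ)` (`dyadic_term_le`), and these
intervals are disjoint. Hence the sum over `ν` is at most a constant times `ϖ_*(γ)`
(`memCk_tsum`).

Finally `min(A, B) ≤ ϖ_*(γ) ≤ A + B` for every `l ∈ (0, ε]`, where
`A = γ ∫_l^ε φ(t) t^{-k-2} dt` and `B = ∫₀^l φ(t) t^{-k-1} dt`. Since the tail integral diverges as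
`l → 0⁺`, the intermediate value theorem gives `l = L(γ)` with `A = B` (`exists_balance`), so that
both are comparable to `ϖ_*(γ)`. Moreover `L(γ) → 0`, because `∫₀^{L(γ)} φ(t) t^{-k-1} dt` is
bounded by `ϖ_*(γ)`, which tends to `0`.
-/

open scoped BigOperators
open MeasureTheory Filter

noncomputable section

/-- Coordinate partial derivative `∂/∂x_j` for functions on `ℝⁿ`. -/
def pderivR {n : ℕ} {F : Type*} [NormedAddCommGroup F] [NormedSpace ℝ F]
    (j : Fin n) (f : (Fin n → ℝ) → F) : (Fin n → ℝ) → F :=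
  fun x => fderiv ℝ f x (Pi.single j 1)

/-- Multi-index partial derivative `∂^α` for functions on `ℝⁿ`. -/
def mderivR {n : ℕ} {F : Type*} [NormedAddCommGroup F] [NormedSpace ℝ F]
    (α : Fin n → ℕ) (f : (Fin n → ℝ) → F) : (Fin n → ℝ) → F :=
  (List.finRange n).foldr (fun j g => (pderivR j)^[α j] g) f

/-- Coordinate partial derivative for functions on `ℂⁿ`. -/
def pderivC {n : ℕ} (j : Fin n) (f : (Fin n → ℂ) → ℂ) : (Fin n → ℂ) → ℂ :=
  fun x => fderiv ℂ f x (Pi.single j 1)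

/-- Multi-index complex partial derivative `∂^α` for functions on `ℂⁿ`. -/
def mderivC {n : ℕ} (α : Fin n → ℕ) (f : (Fin n → ℂ) → ℂ) : (Fin n → ℂ) → ℂ :=
  (List.finRange n).foldr (fun j g => (pderivC j)^[α j] g) f

/-- The finite set of multi-indices `α ∈ ℕⁿ` with `|α| ≤ k`. -/
def multiIdx (n k : ℕ) : Finset (Fin n → ℕ) :=
  ((Finset.univ : Finset (Fin n → Fin (k+1))).image (fun a j => (a j : ℕ))).filter
    (fun α => ∑ j, α j ≤ k)

/-- `ϖ` is a modulus of continuity on `(0, δ]`: positive, nondecreasing, continuous,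
`ϖ(0⁺) = 0`, and `limsup_{x→0⁺} x/ϖ(x) < ∞`. -/
def IsModulus (δ : ℝ) (ϖ : ℝ → ℝ) : Prop :=
  0 < δ ∧ (∀ x ∈ Set.Ioc (0:ℝ) δ, 0 < ϖ x) ∧ MonotoneOn ϖ (Set.Ioc 0 δ) ∧
    ContinuousOn ϖ (Set.Ioc 0 δ) ∧
    Tendsto ϖ (nhdsWithin 0 (Set.Ioi 0)) (nhds 0) ∧
    ∃ C > 0, ∀ᶠ x in nhdsWithin (0:ℝ) (Set.Ioi 0), x / ϖ x ≤ C

/-- Semi separability: `ψ(x) := sup_{0<r<δ/x} ϖ(rx)/ϖ(r) = O(x)` as `x → +∞`. -/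
def SemiSeparable (δ : ℝ) (ϖ : ℝ → ℝ) : Prop :=
  ∃ C > 0, ∃ X₀ ≥ (1:ℝ), ∀ x ≥ X₀, ∀ r > (0:ℝ), r * x < δ → ϖ (r * x) ≤ C * x * ϖ r

/-- Weak homogeneity: for each fixed `0 < a < 1`, `limsup_{x→0⁺} ϖ(x)/ϖ(ax) < ∞`. -/
def WeakHomog (ϖ : ℝ → ℝ) : Prop :=
  ∀ a : ℝ, 0 < a → a < 1 →
    ∃ C > 0, ∀ᶠ x in nhdsWithin (0:ℝ) (Set.Ioi 0), ϖ x ≤ C * ϖ (a * x)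

/-- The Hölder-type seminorm `[g]_ϖ` (with respect to the sup-distance). -/
def hSemi {E F : Type*} [PseudoMetricSpace E] [NormedAddCommGroup F]
    (δ : ℝ) (ϖ : ℝ → ℝ) (g : E → F) : ℝ :=
  sSup {t | ∃ x y : E, 0 < dist x y ∧ dist x y ≤ δ ∧ t = ‖g x - g y‖ / ϖ (dist x y)}

/-- Sup norm of a function. -/
def supNorm {E F : Type*} [NormedAddCommGroup F] (g : E → F) : ℝ :=
  ⨆ x, ‖g x‖

/-- The norm `‖f‖_ϖ = Σ_{|α| ≤ k} ( sup |∂^α f| + [∂^α f]_ϖ )`. -/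
def CkNorm {n : ℕ} {F : Type*} [NormedAddCommGroup F] [NormedSpace ℝ F]
    (k : ℕ) (δ : ℝ) (ϖ : ℝ → ℝ) (f : (Fin n → ℝ) → F) : ℝ :=
  ∑ α ∈ multiIdx n k, (supNorm (mderivR α f) + hSemi δ ϖ (mderivR α f))

/-- Membership in `C_{k,ϖ}(ℝⁿ, F)`: `C^k` with all partial derivatives up to order `k`
bounded and the corresponding `ϖ`-Hölder seminorms finite. -/
def MemCk {n : ℕ} {F : Type*} [NormedAddCommGroup F] [NormedSpace ℝ F]
    (k : ℕ) (δ : ℝ) (ϖ : ℝ → ℝ) (f : (Fin n → ℝ) → F) : Prop :=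
  ContDiff ℝ k f ∧ ∀ α ∈ multiIdx n k,
    BddAbove (Set.range fun x => ‖mderivR α f x‖) ∧
    BddAbove {t | ∃ x y : Fin n → ℝ, 0 < dist x y ∧ dist x y ≤ δ ∧
      t = ‖mderivR α f x - mderivR α f y‖ / ϖ (dist x y)}

/-- Embedding `ℝⁿ ↪ ℂⁿ`. -/
def cplx {n : ℕ} (x : Fin n → ℝ) : Fin n → ℂ := fun j => (x j : ℂ)

def rePart {n : ℕ} (z : Fin n → ℂ) : Fin n → ℝ := fun j => (z j).re

def imPart {n : ℕ} (z : Fin n → ℂ) : Fin n → ℝ := fun j => (z j).im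

/-- Taylor polynomial `P_{f,k}(x; y) = Σ_{|β|≤k} ∂^β f(x) y^β / β!` with complex increment. -/
def taylorCplx {n : ℕ} (f : (Fin n → ℝ) → ℝ) (k : ℕ) (x : Fin n → ℝ) (y : Fin n → ℂ) : ℂ :=
  ∑ β ∈ multiIdx n k,
    ((mderivR β f x : ℝ) : ℂ) * (∏ j, y j ^ β j) / ((∏ j, Nat.factorial (β j) : ℕ) : ℂ)

/-- The convolution operator `S_r f(x) = r^{-n} ∫_{ℝⁿ} K(r^{-1}(x-y)) f(y) dy`, `x ∈ ℂⁿ`. -/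
def Sconv {n : ℕ} (K : (Fin n → ℂ) → ℂ) (r : ℝ) (f : (Fin n → ℝ) → ℝ) (x : Fin n → ℂ) : ℂ :=
  ((r : ℂ) ^ n)⁻¹ * ∫ y : Fin n → ℝ, K ((r : ℂ)⁻¹ • (x - cplx y)) * (f y : ℂ)

/-- The kernel of the Jackson-type approximation theorem: an entire function `K` whose
Fourier transform `K̂` is smooth, supported in the unit ball, even, and satisfies
`K̂(0) = 1`, `∂^α K̂(0) = 0` for `α ≠ 0`. -/
def IsJacksonKernel {n : ℕ} (K : (Fin n → ℂ) → ℂ) (Khat : (Fin n → ℝ) → ℂ) : Prop :=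
  (∀ m : ℕ, ContDiff ℝ m Khat) ∧
  (∀ ξ : Fin n → ℝ, 1 < ‖ξ‖ → Khat ξ = 0) ∧
  (∀ ξ, Khat (-ξ) = Khat ξ) ∧
  Khat 0 = 1 ∧
  (∀ α : Fin n → ℕ, α ≠ 0 → mderivR α Khat 0 = 0) ∧
  ∀ z : Fin n → ℂ, K z =
    (((2 * Real.pi) ^ n : ℝ) : ℂ)⁻¹ *
      ∫ ξ : Fin n → ℝ, Khat ξ * Complex.exp (Complex.I * ∑ j, z j * (ξ j : ℂ))


/-- `f ∼ g` (equivalence up to positive constant factors) as `γ → 0⁺`. -/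
def EquivNearZero (f g : ℝ → ℝ) : Prop :=
  ∃ c₁ > (0:ℝ), ∃ c₂ > (0:ℝ), ∀ᶠ γ in nhdsWithin (0:ℝ) (Set.Ioi 0),
    c₁ * g γ ≤ f γ ∧ f γ ≤ c₂ * g γ

/-! ### Bounded holomorphic functions on strips -/

/-- The open strip `‖Im z‖ < r` in `ℂⁿ`. -/
def openStrip (n : ℕ) (r : ℝ) : Set (Fin n → ℂ) := {z | ‖imPart z‖ < r}

lemma norm_imPart_le {n : ℕ} (w : Fin n → ℂ) : ‖imPart w‖ ≤ ‖w‖ := by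
  refine (pi_norm_le_iff_of_nonneg (norm_nonneg _)).2 fun j => ?_
  exact (Complex.abs_im_le_norm (w j)).trans (norm_le_pi_norm w j)

lemma norm_imPart_add_le {n : ℕ} (z w : Fin n → ℂ) : ‖imPart (z + w)‖ ≤ ‖imPart z‖ + ‖w‖ := by
  have h : imPart (z + w) = imPart z + imPart w := by
    ext j; simp [imPart]
  rw [h]
  exact (norm_add_le _ _).trans (by gcongr; exact norm_imPart_le w)

lemma isOpen_openStrip (n : ℕ) (r : ℝ) : IsOpen (openStrip n r) := by
  have h : Continuous (imPart : (Fin n → ℂ) → Fin n → ℝ) := by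
    unfold imPart; fun_prop
  exact isOpen_lt h.norm continuous_const

lemma add_mem_openStrip {n : ℕ} {r d : ℝ} {z w : Fin n → ℂ} (hz : z ∈ openStrip n (r - d))
    (hw : ‖w‖ ≤ d) : z + w ∈ openStrip n r := by
  have h1 := norm_imPart_add_le z w
  have h2 : ‖imPart z‖ < r - d := hz
  show ‖imPart (z + w)‖ < r
  linarith

lemma openStrip_mono {n : ℕ} {r s : ℝ} (h : r ≤ s) : openStrip n r ⊆ openStrip n s :=
  fun _ hz => lt_of_lt_of_le hz h

section Cauchy

variable {n : ℕ} {W : Type} [NormedAddCommGroup W] [NormedSpace ℂ W] [FiniteDimensional ℂ W]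

omit [FiniteDimensional ℂ W] in
/-- Differentiability along a complex line inside the strip. -/
lemma hasDerivAt_line {G : (Fin n → ℂ) → W} {r : ℝ} (hG : DifferentiableOn ℂ G (openStrip n r))
    {y v : Fin n → ℂ} {t : ℂ} (h : y + t • v ∈ openStrip n r) :
    HasDerivAt (fun t : ℂ => G (y + t • v)) (fderiv ℂ G (y + t • v) v) t := by
  have h1 : HasFDerivAt G (fderiv ℂ G (y + t • v)) (y + t • v) :=
    (hG.differentiableAt ((isOpen_openStrip n r).mem_nhds h)).hasFDerivAt
  have h2 : HasDerivAt (fun t : ℂ => y + t • v) v t := by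
    simpa using ((hasDerivAt_id t).smul_const v).const_add y
  exact h1.comp_hasDerivAt t h2

omit [FiniteDimensional ℂ W] in
/-- Cauchy's estimate for the derivative of a bounded holomorphic function on a strip, obtained from
the one-variable estimate on the disc of radius `d / ‖v‖` in the complex line `t ↦ y + t v`. -/
lemma norm_fderiv_le_of_strip {G : (Fin n → ℂ) → W} {r d M : ℝ} (hd : 0 < d) (hM : 0 ≤ M)
    (hG : DifferentiableOn ℂ G (openStrip n r)) (hb : ∀ z ∈ openStrip n r, ‖G z‖ ≤ M)
    {y : Fin n → ℂ} (hy : y ∈ openStrip n (r - d)) : ‖fderiv ℂ G y‖ ≤ M / d := by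
  refine ContinuousLinearMap.opNorm_le_bound _ (by positivity) fun v => ?_
  rcases eq_or_ne v 0 with rfl | hv
  · simp
  have hv' : 0 < ‖v‖ := norm_pos_iff.2 hv
  have hmem : ∀ t ∈ Metric.closedBall (0 : ℂ) (d / ‖v‖), y + t • v ∈ openStrip n r := by
    intro t ht
    refine add_mem_openStrip hy ?_
    rw [norm_smul]
    rw [mem_closedBall_zero_iff] at ht
    calc ‖t‖ * ‖v‖ ≤ d / ‖v‖ * ‖v‖ := by gcongr
      _ = d := by field_simp
  have hR : 0 < d / ‖v‖ := by positivity
  have h1 : DiffContOnCl ℂ (fun t : ℂ => G (y + t • v)) (Metric.ball 0 (d / ‖v‖)) := by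
    apply DifferentiableOn.diffContOnCl
    rw [closure_ball _ hR.ne']
    intro t ht
    exact (hasDerivAt_line hG (hmem t ht)).differentiableAt.differentiableWithinAt
  have h2 := Complex.norm_deriv_le_of_forall_mem_sphere_norm_le hR h1
    (fun z hz => hb _ (hmem z (Metric.sphere_subset_closedBall hz)))
  rw [(hasDerivAt_line hG (hmem 0 (by simp [hR.le]))).deriv] at h2
  simp only [zero_smul, add_zero] at h2
  calc ‖fderiv ℂ G y v‖ ≤ M / (d / ‖v‖) := h2
    _ = M / d * ‖v‖ := by field_simp

/-- A bounded holomorphic function on a strip has a holomorphic derivative: each directional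
derivative is a Cauchy integral over a circle, which is differentiated under the integral sign. -/
lemma differentiableOn_fderiv_strip {G : (Fin n → ℂ) → W} {r d M : ℝ} (hd : 0 < d) (hM : 0 ≤ M)
    (hG : DifferentiableOn ℂ G (openStrip n r)) (hb : ∀ z ∈ openStrip n r, ‖G z‖ ≤ M) :
    DifferentiableOn ℂ (fderiv ℂ G) (openStrip n (r - d)) := by
  have : CompleteSpace W := FiniteDimensional.complete ℂ W
  have hd2 : (0 : ℝ) < d / 2 := by positivity
  have key : ∀ j : Fin n, DifferentiableOn ℂ (fun x => fderiv ℂ G x (Pi.single j 1))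
      (openStrip n (r - d)) := by
    intro j
    set e : Fin n → ℂ := Pi.single j 1 with he
    have hen : ‖e‖ = 1 := by simp [he, Pi.norm_single]
    have hcm : ∀ θ : ℝ, ‖circleMap 0 (d / 2) θ • e‖ = d / 2 := by
      intro θ
      rw [norm_smul, hen, mul_one, norm_circleMap_zero, abs_of_pos hd2]
    have hmem : ∀ x ∈ openStrip n (r - d), ∀ θ : ℝ,
        x + circleMap 0 (d / 2) θ • e ∈ openStrip n (r - d / 2) := by
      intro x hx θ
      refine add_mem_openStrip (d := d / 2) ?_ (hcm θ).le
      rwa [sub_sub, add_halves]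
    have hmem' : ∀ x ∈ openStrip n (r - d), ∀ θ : ℝ,
        x + circleMap 0 (d / 2) θ • e ∈ openStrip n r := fun x hx θ =>
      openStrip_mono (by linarith) (hmem x hx θ)
    have hrep : ∀ x ∈ openStrip n (r - d), fderiv ℂ G x e =
        (2 * Real.pi * Complex.I : ℂ)⁻¹ • ∫ θ in (0 : ℝ)..2 * Real.pi,
          deriv (circleMap 0 (d / 2)) θ • (((circleMap 0 (d / 2) θ) ^ 2)⁻¹ •
            G (x + circleMap 0 (d / 2) θ • e)) := by
      intro x hx
      have hxr : ∀ t ∈ Metric.ball (0 : ℂ) d, x + t • e ∈ openStrip n r := by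
        intro t ht
        refine add_mem_openStrip hx ?_
        rw [norm_smul, hen, mul_one]
        exact (mem_ball_zero_iff.1 ht).le
      have hdo : DifferentiableOn ℂ (fun t : ℂ => G (x + t • e)) (Metric.ball 0 d) :=
        fun t ht => (hasDerivAt_line hG (hxr t ht)).differentiableAt.differentiableWithinAt
      have h1 := Complex.cderiv_eq_deriv (z := 0) Metric.isOpen_ball hdo hd2
        (Metric.closedBall_subset_ball (by linarith))
      rw [(hasDerivAt_line hG (hxr 0 (by simpa using hd))).deriv] at h1
      simp only [zero_smul, add_zero] at h1
      rw [← h1]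
      simp [Complex.cderiv, circleIntegral]
    intro x₀ hx₀
    have hnhds : openStrip n (r - d) ∈ nhds x₀ := (isOpen_openStrip n _).mem_nhds hx₀
    have hcont : ∀ x ∈ openStrip n (r - d),
        Continuous fun θ : ℝ => G (x + circleMap 0 (d / 2) θ • e) := by
      intro x hx
      refine hG.continuousOn.comp_continuous ?_ (hmem' x hx)
      have := continuous_circleMap (0 : ℂ) (d / 2)
      fun_prop
    have hcc : Continuous fun θ : ℝ => circleMap (0 : ℂ) (d / 2) θ := continuous_circleMap _ _
    have hne : ∀ θ : ℝ, circleMap (0 : ℂ) (d / 2) θ ^ 2 ≠ 0 := fun θ =>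
      pow_ne_zero _ (circleMap_ne_center hd2.ne')
    have hinv : Continuous fun θ : ℝ => ((circleMap (0 : ℂ) (d / 2) θ) ^ 2)⁻¹ :=
      (hcc.pow 2).inv₀ hne
    have hder : Continuous fun θ : ℝ => deriv (circleMap (0 : ℂ) (d / 2)) θ := by
      simp only [deriv_circleMap]; fun_prop
    have hHcont : ∀ x ∈ openStrip n (r - d), Continuous fun θ : ℝ =>
        deriv (circleMap 0 (d / 2)) θ • (((circleMap 0 (d / 2) θ) ^ 2)⁻¹ •
            G (x + circleMap 0 (d / 2) θ • e)) := fun x hx =>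
      hder.smul (hinv.smul (hcont x hx))
    have hint := intervalIntegral.hasFDerivAt_integral_of_dominated_of_fderiv_le (𝕜 := ℂ)
      (μ := volume) (a := 0) (b := 2 * Real.pi) (x₀ := x₀) (s := openStrip n (r - d))
      (F := fun x θ => deriv (circleMap 0 (d / 2)) θ • (((circleMap 0 (d / 2) θ) ^ 2)⁻¹ •
            G (x + circleMap 0 (d / 2) θ • e)))
      (F' := fun x θ => deriv (circleMap 0 (d / 2)) θ • (((circleMap 0 (d / 2) θ) ^ 2)⁻¹ •
            fderiv ℂ G (x + circleMap 0 (d / 2) θ • e)))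
      (bound := fun _ => d / 2 * (((d / 2) ^ 2)⁻¹ * (M / (d / 2))))
      hnhds
      (by
        filter_upwards [hnhds] with x hx
        exact (hHcont x hx).aestronglyMeasurable)
      ((hHcont x₀ hx₀).intervalIntegrable _ _)
      (by
        have hm : Measurable fun θ : ℝ => fderiv ℂ G (x₀ + circleMap 0 (d / 2) θ • e) := by
          refine (measurable_fderiv ℂ G).comp (Continuous.measurable ?_)
          fun_prop
        have : ProperSpace ((Fin n → ℂ) →L[ℂ] W) := FiniteDimensional.proper ℂ _
        exact hder.aestronglyMeasurable.smul (hinv.aestronglyMeasurable.smul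
          hm.aestronglyMeasurable))
      (by
        refine Filter.Eventually.of_forall fun θ _ x hx => ?_
        rw [norm_smul, norm_smul, norm_inv, norm_pow, norm_circleMap_zero, abs_of_pos hd2]
        have h3 : ‖deriv (circleMap (0 : ℂ) (d / 2)) θ‖ = d / 2 := by
          simp only [deriv_circleMap, norm_mul, norm_circleMap_zero, abs_of_pos hd2, Complex.norm_I,
            mul_one]
        rw [h3]
        gcongr
        exact norm_fderiv_le_of_strip hd2 hM hG hb (hmem x hx θ))
      (by simp)
      (by
        refine Filter.Eventually.of_forall fun θ _ x hx => ?_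
        have h1 : HasFDerivAt G (fderiv ℂ G (x + circleMap 0 (d / 2) θ • e))
            (x + circleMap 0 (d / 2) θ • e) :=
          (hG.differentiableAt ((isOpen_openStrip n r).mem_nhds (hmem' x hx θ))).hasFDerivAt
        exact (((hasFDerivAt_comp_add_right _).2 h1).const_smul _).const_smul _)
    have hd1 : DifferentiableAt ℂ (fun x => (2 * Real.pi * Complex.I : ℂ)⁻¹ •
        ∫ θ in (0 : ℝ)..2 * Real.pi, deriv (circleMap 0 (d / 2)) θ •
          (((circleMap 0 (d / 2) θ) ^ 2)⁻¹ • G (x + circleMap 0 (d / 2) θ • e))) x₀ :=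
      (hint.differentiableAt).const_smul _
    refine (hd1.congr_of_eventuallyEq ?_).differentiableWithinAt
    filter_upwards [hnhds] with x hx using hrep x hx
  have hsum : fderiv ℂ G = fun x => ∑ j : Fin n,
      ContinuousLinearMap.smulRightL ℂ (Fin n → ℂ) W (ContinuousLinearMap.proj j)
        (fderiv ℂ G x (Pi.single j 1)) := by
    ext x v
    conv_lhs => rw [pi_eq_sum_univ' v]
    simp [map_sum]
  rw [hsum]
  refine DifferentiableOn.fun_sum fun j _ => ?_
  exact (ContinuousLinearMap.differentiable _).comp_differentiableOn (key j)

end Cauchy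

/-! ### Cauchy estimates on real space and mixed partials -/

section RealSide

variable {n : ℕ}

/-- The embedding `cplx` as a continuous real-linear map. -/
def cplxCLM (n : ℕ) : (Fin n → ℝ) →L[ℝ] (Fin n → ℂ) :=
  ContinuousLinearMap.pi fun j => Complex.ofRealCLM.comp (ContinuousLinearMap.proj j)

lemma cplxCLM_apply (x : Fin n → ℝ) : cplxCLM n x = cplx x := rfl

lemma norm_cplx_le (x : Fin n → ℝ) : ‖cplx x‖ ≤ ‖x‖ := by
  refine (pi_norm_le_iff_of_nonneg (norm_nonneg _)).2 fun j => ?_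
  simpa [cplx] using norm_le_pi_norm x j

lemma cplx_mem_openStrip {r : ℝ} (hr : 0 < r) (x : Fin n → ℝ) : cplx x ∈ openStrip n r := by
  have h : imPart (cplx x) = 0 := by ext j; simp [imPart, cplx]
  show ‖imPart (cplx x)‖ < r
  simpa [h] using hr

variable {W : Type} [NormedAddCommGroup W] [NormedSpace ℂ W]

/-- Restriction of complex-linear maps on `ℂⁿ` to `ℝⁿ`, as a real-linear contraction. -/
def restrictReal (n : ℕ) (W : Type) [NormedAddCommGroup W] [NormedSpace ℂ W] :
    ((Fin n → ℂ) →L[ℂ] W) →L[ℝ] ((Fin n → ℝ) →L[ℝ] W) :=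
  LinearMap.mkContinuous
    { toFun := fun A => (A.restrictScalars ℝ).comp (cplxCLM n)
      map_add' := fun A B => by ext v; simp
      map_smul' := fun c A => by ext v; simp }
    1 (by
      intro A
      rw [one_mul]
      refine ContinuousLinearMap.opNorm_le_bound _ (norm_nonneg _) fun v => ?_
      exact (A.le_opNorm _).trans (by gcongr; exact norm_cplx_le v))

lemma norm_restrictReal_le : ‖restrictReal n W‖ ≤ 1 :=
  LinearMap.mkContinuous_norm_le _ zero_le_one _

lemma hasFDerivAt_comp_cplx {G : (Fin n → ℂ) → W} {r : ℝ} (hr : 0 < r)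
    (hG : DifferentiableOn ℂ G (openStrip n r)) (x : Fin n → ℝ) :
    HasFDerivAt (fun x => G (cplx x)) (restrictReal n W (fderiv ℂ G (cplx x))) x := by
  have h1 : HasFDerivAt G ((fderiv ℂ G (cplx x)).restrictScalars ℝ) (cplxCLM n x) :=
    ((hG.differentiableAt ((isOpen_openStrip n r).mem_nhds
      (cplx_mem_openStrip hr x))).hasFDerivAt).restrictScalars ℝ
  exact h1.comp x (cplxCLM n).hasFDerivAt

/-- Cauchy estimates of every order for the restriction to `ℝⁿ` of a bounded holomorphic function
on a strip. -/
lemma exists_cauchy_const (n m : ℕ) : ∃ C : ℝ, 0 ≤ C ∧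
    ∀ (W : Type) [NormedAddCommGroup W] [NormedSpace ℂ W] [FiniteDimensional ℂ W]
      (G : (Fin n → ℂ) → W) (r M : ℝ), 0 < r → 0 ≤ M → DifferentiableOn ℂ G (openStrip n r) →
      (∀ z ∈ openStrip n r, ‖G z‖ ≤ M) →
      ContDiff ℝ m (fun x : Fin n → ℝ => G (cplx x)) ∧
      ∀ x, ‖iteratedFDeriv ℝ m (fun x : Fin n → ℝ => G (cplx x)) x‖ ≤ C * M / r ^ m := by
  induction m with
  | zero =>
    refine ⟨1, zero_le_one, ?_⟩
    intro W _ _ _ G r M hr hM hG hb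
    refine ⟨?_, fun x => ?_⟩
    · rw [Nat.cast_zero, contDiff_zero]
      exact continuous_iff_continuousAt.2 fun x => (hasFDerivAt_comp_cplx hr hG x).continuousAt
    · rw [norm_iteratedFDeriv_zero]
      simpa using hb _ (cplx_mem_openStrip hr x)
  | succ m ih =>
    obtain ⟨C, hC, h⟩ := ih
    refine ⟨C * 2 ^ (m + 1), by positivity, ?_⟩
    intro W _ _ _ G r M hr hM hG hb
    have hr2 : 0 < r / 2 := by positivity
    have hrr : r - r / 2 = r / 2 := by ring
    -- the derivative is holomorphic and bounded by `M / (r / 2)` on the half strip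
    have hG' := differentiableOn_fderiv_strip hr2 hM hG hb
    have hb' : ∀ z ∈ openStrip n (r - r / 2), ‖fderiv ℂ G z‖ ≤ M / (r / 2) := fun z hz =>
      norm_fderiv_le_of_strip hr2 hM hG hb hz
    rw [hrr] at hG' hb'
    obtain ⟨h1, h2⟩ := h ((Fin n → ℂ) →L[ℂ] W) (fderiv ℂ G) (r / 2) (M / (r / 2)) hr2
      (by positivity) hG' hb'
    have hfd : fderiv ℝ (fun x : Fin n → ℝ => G (cplx x)) =
        restrictReal n W ∘ fun x => fderiv ℂ G (cplx x) :=
      funext fun x => (hasFDerivAt_comp_cplx hr hG x).fderiv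
    refine ⟨?_, fun x => ?_⟩
    · rw [Nat.cast_succ, contDiff_succ_iff_fderiv]
      refine ⟨fun x => (hasFDerivAt_comp_cplx hr hG x).differentiableAt, by simp, ?_⟩
      rw [hfd]
      exact (restrictReal n W).contDiff.comp h1
    · rw [← norm_iteratedFDeriv_fderiv, hfd]
      calc _ ≤ ‖restrictReal n W‖ * ‖iteratedFDeriv ℝ m (fun x => fderiv ℂ G (cplx x)) x‖ :=
            (restrictReal n W).norm_iteratedFDeriv_comp_left h1.contDiffAt le_rfl
        _ ≤ 1 * (C * (M / (r / 2)) / (r / 2) ^ m) := by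
            gcongr
            · exact norm_restrictReal_le
            · exact h2 x
        _ = C * 2 ^ (m + 1) * M / r ^ (m + 1) := by
            rw [div_pow]
            field_simp
            ring

/-- The real-part version of `exists_cauchy_const`, uniform over all orders up to `k`. -/
lemma exists_cauchy_const_re (n k : ℕ) : ∃ C : ℝ, 0 ≤ C ∧
    ∀ (G : (Fin n → ℂ) → ℂ) (r M : ℝ), 0 < r → 0 ≤ M → DifferentiableOn ℂ G (openStrip n r) →
      (∀ z ∈ openStrip n r, ‖G z‖ ≤ M) → ∀ m ≤ k,
      ContDiff ℝ m (fun x : Fin n → ℝ => (G (cplx x)).re) ∧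
      ∀ x, ‖iteratedFDeriv ℝ m (fun x : Fin n → ℝ => (G (cplx x)).re) x‖ ≤ C * M / r ^ m := by
  choose C hC h using exists_cauchy_const n
  refine ⟨∑ m ∈ Finset.range (k + 1), C m, Finset.sum_nonneg fun m _ => hC m, ?_⟩
  intro G r M hr hM hG hb m hm
  obtain ⟨h1, h2⟩ := h m ℂ G r M hr hM hG hb
  refine ⟨Complex.reCLM.contDiff.comp h1, fun x => ?_⟩
  have hle : C m ≤ ∑ m ∈ Finset.range (k + 1), C m :=
    Finset.single_le_sum (fun m _ => hC m) (Finset.mem_range.2 (by omega))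
  calc _ ≤ ‖Complex.reCLM‖ * ‖iteratedFDeriv ℝ m (fun x : Fin n → ℝ => G (cplx x)) x‖ :=
        Complex.reCLM.norm_iteratedFDeriv_comp_left h1.contDiffAt le_rfl
    _ ≤ C m * M / r ^ m := by simpa using h2 x
    _ ≤ _ := by gcongr

/-- A mixed partial derivative of order `p = |α|` is a fixed continuous linear image of the
`p`-th Fréchet derivative. -/
lemma exists_mderivR_eq {k : ℕ} {f : (Fin n → ℝ) → ℝ} (hf : ContDiff ℝ k f) (α : Fin n → ℕ)
    (hα : ∑ j, α j ≤ k) :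
    ∃ T : ((Fin n → ℝ) [×(∑ j, α j)]→L[ℝ] ℝ) →L[ℝ] ℝ,
      mderivR α f = fun x => T (iteratedFDeriv ℝ (∑ j, α j) f x) := by
  let P : ℕ → ((Fin n → ℝ) → ℝ) → Prop := fun p h =>
    ∃ T : ((Fin n → ℝ) [×p]→L[ℝ] ℝ) →L[ℝ] ℝ, h = fun x => T (iteratedFDeriv ℝ p f x)
  have step : ∀ (p : ℕ) (h : (Fin n → ℝ) → ℝ) (j : Fin n), p + 1 ≤ k → P p h →
      P (p + 1) (pderivR j h) := by
    rintro p h j hp ⟨T, rfl⟩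
    refine ⟨T.comp ((ContinuousLinearMap.apply ℝ _ (Pi.single j (1 : ℝ) : Fin n → ℝ)).comp
      ((continuousMultilinearCurryLeftEquiv ℝ (fun _ : Fin (p + 1) => Fin n → ℝ) ℝ
        ).toContinuousLinearEquiv : _ →L[ℝ] _)), ?_⟩
    funext x
    have hd : DifferentiableAt ℝ (iteratedFDeriv ℝ p f) x :=
      (hf.differentiable_iteratedFDeriv (by exact_mod_cast hp)) x
    have h1 : HasFDerivAt (fun x => T (iteratedFDeriv ℝ p f x))
        (T.comp (fderiv ℝ (iteratedFDeriv ℝ p f) x)) x := T.hasFDerivAt.comp x hd.hasFDerivAt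
    show fderiv ℝ (fun x => T (iteratedFDeriv ℝ p f x)) x (Pi.single j 1) = _
    rw [h1.fderiv, fderiv_iteratedFDeriv]
    rfl
  have iter : ∀ (a p : ℕ) (h : (Fin n → ℝ) → ℝ) (j : Fin n), p + a ≤ k → P p h →
      P (p + a) ((pderivR j)^[a] h) := by
    intro a
    induction a with
    | zero => intro p h j _ hP; exact hP
    | succ a ih =>
      intro p h j hp hP
      rw [Function.iterate_succ_apply']
      exact step (p + a) _ j (by omega) (ih p h j (by omega) hP)
  have list : ∀ l : List (Fin n), (l.map α).sum ≤ k →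
      P ((l.map α).sum) (l.foldr (fun j g => (pderivR j)^[α j] g) f) := by
    intro l
    induction l with
    | nil =>
      intro _
      show P 0 f
      refine ⟨((continuousMultilinearCurryFin0 ℝ (Fin n → ℝ) ℝ
        ).toContinuousLinearEquiv).toContinuousLinearMap, ?_⟩
      funext x
      simp
    | cons j l ih =>
      intro hl
      simp only [List.map_cons, List.sum_cons, List.foldr_cons] at hl ⊢
      rw [add_comm]
      exact iter _ _ _ _ (by omega) (ih (by omega))
  have hs : ((List.finRange n).map α).sum = ∑ j, α j := (Fin.sum_univ_def α).symm
  have := list (List.finRange n) (by omega)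
  rw [hs] at this
  exact this

end RealSide

/-! ### The critical modulus -/

/-- The hypotheses on the approximation rate `φ`, transported from `(0, 1]` to `(0, ε]`: `φ` is
positive and nondecreasing, and `k` is its critical exponent. -/
structure IsRate (φ : ℝ → ℝ) (ε : ℝ) (k : ℕ) : Prop where
  eps_pos : 0 < ε
  mono : MonotoneOn φ (Set.Ici 0)
  cont : ContinuousOn φ (Set.Ici 0)
  pos : ∀ t, 0 < t → 0 < φ t
  int : IntegrableOn (fun t => φ t / t ^ (k + 1)) (Set.Ioc 0 ε)
  not_int : ¬ IntegrableOn (fun t => φ t / t ^ (k + 2)) (Set.Ioc 0 ε)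

lemma continuousOn_div_pow {φ : ℝ → ℝ} (hc : ContinuousOn φ (Set.Ici 0)) (m : ℕ) :
    ContinuousOn (fun t => φ t / t ^ m) (Set.Ioi 0) :=
  (hc.mono Set.Ioi_subset_Ici_self).div (continuousOn_id.pow m)
    fun _ ht => pow_ne_zero _ (ne_of_gt ht)

lemma integrableOn_div_pow {φ : ℝ → ℝ} (hc : ContinuousOn φ (Set.Ici 0)) (m : ℕ) {a : ℝ}
    (ha : 0 < a) (b : ℝ) : IntegrableOn (fun t => φ t / t ^ m) (Set.Ioc a b) :=
  (((continuousOn_div_pow hc m).mono fun _ ht => lt_of_lt_of_le ha ht.1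
    ).integrableOn_compact isCompact_Icc).mono_set Set.Ioc_subset_Icc_self

lemma integrableOn_Ioc_zero_of {φ : ℝ → ℝ} (hc : ContinuousOn φ (Set.Ici 0)) (m : ℕ) {a : ℝ}
    (ha : 0 < a) (b : ℝ) (h : IntegrableOn (fun t => φ t / t ^ m) (Set.Ioc 0 a)) :
    IntegrableOn (fun t => φ t / t ^ m) (Set.Ioc 0 b) := by
  refine (h.union (integrableOn_div_pow hc m ha b)).mono_set fun t ht => ?_
  rcases le_or_gt t a with h1 | h1
  · exact Or.inl ⟨ht.1, h1⟩
  · exact Or.inr ⟨h1, ht.2⟩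

lemma isRate_of {φ : ℝ → ℝ} {ε : ℝ} {k : ℕ} (hε : 0 < ε) (hm : MonotoneOn φ (Set.Ici 0))
    (hc : ContinuousOn φ (Set.Ici 0)) (h0 : φ 0 = 0)
    (hconv : IntegrableOn (fun x : ℝ => φ x / x ^ (k + 1)) (Set.Ioc 0 1))
    (hdiv : ¬ IntegrableOn (fun x : ℝ => φ x / x ^ (k + 2)) (Set.Ioc 0 1)) : IsRate φ ε k := by
  refine ⟨hε, hm, hc, fun t ht => ?_, integrableOn_Ioc_zero_of hc _ one_pos _ hconv,
    fun h => hdiv (integrableOn_Ioc_zero_of hc _ hε _ h)⟩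
  -- if `φ` vanished at a point it would vanish on an initial interval
  by_contra hneg
  refine hdiv (integrableOn_Ioc_zero_of hc _ ht _ ?_)
  refine (integrableOn_zero : IntegrableOn (fun _ : ℝ => (0 : ℝ)) (Set.Ioc 0 t)).congr_fun
    (fun s hs => ?_) measurableSet_Ioc
  have h1 : φ s ≤ φ t := hm hs.1.le ht.le hs.2
  have h2 : φ 0 ≤ φ s := hm (Set.mem_Ici.2 le_rfl) hs.1.le hs.1.le
  have h3 : φ s = 0 := by linarith
  simp [h3]

/-- The modulus `ϖ_*(γ) = ∫₀^ε φ(t) t^{-k-1} min(1, γ/t) dt`. Splitting at `t = γ` it equals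
`∫₀^γ φ(t) t^{-k-1} dt + γ ∫_γ^ε φ(t) t^{-k-2} dt`. -/
def critMod (φ : ℝ → ℝ) (ε : ℝ) (k : ℕ) (γ : ℝ) : ℝ :=
  ∫ t in Set.Ioc 0 ε, φ t / t ^ (k + 1) * min 1 (γ / t)

namespace IsRate

variable {φ : ℝ → ℝ} {ε : ℝ} {k : ℕ} (h : IsRate φ ε k)

include h

lemma div_pos {t : ℝ} (ht : 0 < t) (m : ℕ) : 0 < φ t / t ^ m :=
  _root_.div_pos (h.pos t ht) (pow_pos ht m)

lemma contOn_integrand (γ : ℝ) :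
    ContinuousOn (fun t => φ t / t ^ (k + 1) * min 1 (γ / t)) (Set.Ioi 0) :=
  (continuousOn_div_pow h.cont _).mul (ContinuousOn.inf continuousOn_const
    (continuousOn_const.div continuousOn_id fun _ ht => ne_of_gt ht))

lemma norm_integrand_le {γ : ℝ} (hγ : 0 ≤ γ) {t : ℝ} (ht : 0 < t) :
    ‖φ t / t ^ (k + 1) * min 1 (γ / t)‖ ≤ φ t / t ^ (k + 1) := by
  have h1 := h.div_pos ht (k + 1)
  have h2 : 0 ≤ min 1 (γ / t) := le_min zero_le_one (by positivity)
  rw [Real.norm_of_nonneg (by positivity)]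
  exact mul_le_of_le_one_right h1.le (min_le_left _ _)

lemma aesm_integrand (γ : ℝ) :
    AEStronglyMeasurable (fun t => φ t / t ^ (k + 1) * min 1 (γ / t))
      (volume.restrict (Set.Ioc 0 ε)) :=
  ((h.contOn_integrand γ).mono fun _ ht => ht.1).aestronglyMeasurable measurableSet_Ioc

lemma integrable_integrand {γ : ℝ} (hγ : 0 ≤ γ) :
    IntegrableOn (fun t => φ t / t ^ (k + 1) * min 1 (γ / t)) (Set.Ioc 0 ε) := by
  refine Integrable.mono' h.int (h.aesm_integrand γ) ?_
  filter_upwards [ae_restrict_mem measurableSet_Ioc] with t ht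
  exact h.norm_integrand_le hγ ht.1

lemma critMod_mono {γ₁ γ₂ : ℝ} (h1 : 0 ≤ γ₁) (h2 : γ₁ ≤ γ₂) :
    critMod φ ε k γ₁ ≤ critMod φ ε k γ₂ := by
  refine setIntegral_mono_on (h.integrable_integrand h1) (h.integrable_integrand (h1.trans h2))
    measurableSet_Ioc fun t ht => ?_
  have := (h.div_pos ht.1 (k + 1)).le
  have := ht.1
  gcongr

lemma int_pos {l : ℝ} (hl : 0 < l) (hlε : l ≤ ε) :
    0 < ∫ t in Set.Ioc 0 l, φ t / t ^ (k + 1) := by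
  rw [← intervalIntegral.integral_of_le hl.le]
  refine intervalIntegral.intervalIntegral_pos_of_pos_on ?_ (fun t ht => h.div_pos ht.1 _) hl
  rw [intervalIntegrable_iff_integrableOn_Ioc_of_le hl.le]
  exact h.int.mono_set (Set.Ioc_subset_Ioc_right hlε)

lemma le_critMod {γ : ℝ} (h0 : 0 ≤ γ) (hγ : γ ≤ ε) :
    γ * ((∫ t in Set.Ioc 0 ε, φ t / t ^ (k + 1)) / ε) ≤ critMod φ ε k γ := by
  have hε := h.eps_pos
  have h1 : γ * ((∫ t in Set.Ioc 0 ε, φ t / t ^ (k + 1)) / ε) =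
      ∫ t in Set.Ioc 0 ε, φ t / t ^ (k + 1) * (γ / ε) := by
    rw [integral_mul_const]; ring
  rw [h1]
  refine setIntegral_mono_on (h.int.mul_const _) (h.integrable_integrand h0)
    measurableSet_Ioc fun t ht => ?_
  have := (h.div_pos ht.1 (k + 1)).le
  have ht0 := ht.1
  refine mul_le_mul_of_nonneg_left (le_min ?_ ?_) this
  · rw [div_le_one hε]; exact hγ
  · exact div_le_div_of_nonneg_left h0 ht0 ht.2

lemma critMod_pos {γ : ℝ} (h0 : 0 < γ) : 0 < critMod φ ε k γ := by
  have hε := h.eps_pos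
  have h1 := h.le_critMod (le_min h0.le hε.le) (min_le_right γ ε)
  have h2 := h.int_pos hε le_rfl
  have h3 : 0 < min γ ε := lt_min h0 hε
  exact lt_of_lt_of_le (by positivity) (h1.trans
    (h.critMod_mono h3.le (min_le_left _ _)))

lemma continuousOn_critMod : ContinuousOn (critMod φ ε k) (Set.Ici 0) := by
  intro γ₀ _
  refine continuousWithinAt_of_dominated (bound := fun t => φ t / t ^ (k + 1))
    (Eventually.of_forall fun γ => h.aesm_integrand γ) ?_ h.int ?_
  · filter_upwards [self_mem_nhdsWithin] with γ hγ
    filter_upwards [ae_restrict_mem measurableSet_Ioc] with t ht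
    exact h.norm_integrand_le hγ ht.1
  · refine Eventually.of_forall fun t => ?_
    have : Continuous fun γ => φ t / t ^ (k + 1) * min 1 (γ / t) := by fun_prop
    exact this.continuousWithinAt

lemma tendsto_critMod :
    Tendsto (critMod φ ε k) (nhdsWithin 0 (Set.Ioi 0)) (nhds 0) := by
  have h1 := h.continuousOn_critMod 0 (Set.mem_Ici.2 le_rfl)
  have h2 : critMod φ ε k 0 = 0 := by simp [critMod]
  have h3 := h1.mono Set.Ioi_subset_Ici_self
  rwa [ContinuousWithinAt, h2] at h3

lemma isModulus : IsModulus ε (critMod φ ε k) := by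
  refine ⟨h.eps_pos, fun x hx => h.critMod_pos hx.1, fun x hx y _ hxy =>
    h.critMod_mono hx.1.le hxy, h.continuousOn_critMod.mono fun x hx => hx.1.le,
    h.tendsto_critMod, ((∫ t in Set.Ioc 0 ε, φ t / t ^ (k + 1)) / ε)⁻¹, ?_, ?_⟩
  · have := h.int_pos h.eps_pos le_rfl
    have := h.eps_pos
    positivity
  · have hpos : 0 < (∫ t in Set.Ioc 0 ε, φ t / t ^ (k + 1)) / ε :=
      _root_.div_pos (h.int_pos h.eps_pos le_rfl) h.eps_pos
    filter_upwards [Ioc_mem_nhdsGT h.eps_pos] with x hx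
    rw [div_le_iff₀ (h.critMod_pos hx.1), ← div_eq_inv_mul, le_div_iff₀ hpos]
    exact h.le_critMod hx.1.le hx.2

lemma critMod_split {γ l : ℝ} (hγ : 0 ≤ γ) (hl : 0 < l) (hlε : l ≤ ε) :
    critMod φ ε k γ = (∫ t in Set.Ioc 0 l, φ t / t ^ (k + 1) * min 1 (γ / t)) +
      ∫ t in Set.Ioc l ε, φ t / t ^ (k + 1) * min 1 (γ / t) := by
  have hi := h.integrable_integrand hγ
  rw [critMod, ← Set.Ioc_union_Ioc_eq_Ioc hl.le hlε] at *
  exact setIntegral_union (Set.Ioc_disjoint_Ioc_of_le le_rfl) measurableSet_Ioc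
    (hi.mono_set Set.subset_union_left) (hi.mono_set Set.subset_union_right)

lemma low_le {γ l : ℝ} (hγ : 0 ≤ γ) (hlε : l ≤ ε) :
    ∫ t in Set.Ioc 0 l, φ t / t ^ (k + 1) * min 1 (γ / t) ≤
      ∫ t in Set.Ioc 0 l, φ t / t ^ (k + 1) := by
  refine setIntegral_mono_on ((h.integrable_integrand hγ).mono_set (Set.Ioc_subset_Ioc_right hlε))
    (h.int.mono_set (Set.Ioc_subset_Ioc_right hlε)) measurableSet_Ioc fun t ht => ?_
  exact (le_abs_self _).trans (h.norm_integrand_le hγ ht.1)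

lemma low_nonneg {γ l : ℝ} (hγ : 0 ≤ γ) :
    0 ≤ ∫ t in Set.Ioc 0 l, φ t / t ^ (k + 1) * min 1 (γ / t) := by
  refine setIntegral_nonneg measurableSet_Ioc fun t ht => ?_
  have h0 := ht.1
  have := h.div_pos h0 (k + 1)
  have h2 : 0 ≤ min 1 (γ / t) := le_min zero_le_one (by positivity)
  positivity

lemma high_nonneg {γ l : ℝ} (hγ : 0 ≤ γ) (hl : 0 < l) :
    0 ≤ ∫ t in Set.Ioc l ε, φ t / t ^ (k + 1) * min 1 (γ / t) := by
  refine setIntegral_nonneg measurableSet_Ioc fun t ht => ?_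
  have h0 : 0 < t := hl.trans ht.1
  have := h.div_pos h0 (k + 1)
  have h2 : 0 ≤ min 1 (γ / t) := le_min zero_le_one (by positivity)
  positivity

lemma high_le {γ l : ℝ} (hγ : 0 ≤ γ) (hl : 0 < l) :
    ∫ t in Set.Ioc l ε, φ t / t ^ (k + 1) * min 1 (γ / t) ≤
      γ * ∫ t in Set.Ioc l ε, φ t / t ^ (k + 2) := by
  rw [← integral_const_mul]
  refine setIntegral_mono_on ((h.integrable_integrand hγ).mono_set (Set.Ioc_subset_Ioc_left hl.le))
    ((integrableOn_div_pow h.cont _ hl ε).const_mul _) measurableSet_Ioc fun t ht => ?_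
  have h0 : 0 < t := hl.trans ht.1
  have := h.div_pos h0 (k + 1)
  calc _ ≤ φ t / t ^ (k + 1) * (γ / t) := by gcongr; exact min_le_right _ _
    _ = _ := by rw [pow_succ t (k + 1)]; field_simp

lemma critMod_le {γ l : ℝ} (hγ : 0 ≤ γ) (hl : 0 < l) (hlε : l ≤ ε) :
    critMod φ ε k γ ≤ (∫ t in Set.Ioc 0 l, φ t / t ^ (k + 1)) +
      γ * ∫ t in Set.Ioc l ε, φ t / t ^ (k + 2) := by
  rw [h.critMod_split hγ hl hlε]
  exact add_le_add (h.low_le hγ hlε) (h.high_le hγ hl)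

/-- At least one of the two balanced quantities is dominated by `ϖ_*`, according to the position
of `γ` relative to the splitting point. -/
lemma min_le_critMod {γ l : ℝ} (hγ : 0 ≤ γ) (hl : 0 < l) (hlε : l ≤ ε) :
    min (∫ t in Set.Ioc 0 l, φ t / t ^ (k + 1)) (γ * ∫ t in Set.Ioc l ε, φ t / t ^ (k + 2)) ≤
      critMod φ ε k γ := by
  rw [h.critMod_split hγ hl hlε]
  rcases le_total l γ with hc | hc
  · refine (min_le_left _ _).trans (le_add_of_le_of_nonneg (le_of_eq ?_) (h.high_nonneg hγ hl))
    refine setIntegral_congr_fun measurableSet_Ioc fun t ht => ?_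
    have : (1 : ℝ) ≤ γ / t := by rw [one_le_div ht.1]; exact ht.2.trans hc
    simp [min_eq_left this]
  · refine (min_le_right _ _).trans (le_add_of_nonneg_of_le (h.low_nonneg hγ) (le_of_eq ?_))
    rw [← integral_const_mul]
    refine setIntegral_congr_fun measurableSet_Ioc fun t ht => ?_
    have h0 : 0 < t := hl.trans ht.1
    have h1 : γ / t ≤ 1 := by rw [div_le_one h0]; exact hc.trans ht.1.le
    simp only [min_eq_right h1, pow_succ t (k + 1)]
    field_simp

lemma exists_tail_gt (M : ℝ) :
    ∃ l, 0 < l ∧ l < ε ∧ M < ∫ t in Set.Ioc l ε, φ t / t ^ (k + 2) := by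
  by_contra! hcon
  have hε := h.eps_pos
  refine h.not_int ?_
  refine integrableOn_Ioc_of_intervalIntegral_norm_bounded_left (l := atTop) (I := M)
    (a := fun j : ℕ => ε / 2 / (j + 1)) (fun j => integrableOn_div_pow h.cont _ (by positivity) _)
    ?_ ?_
  · exact tendsto_const_div_atTop_nhds_zero_nat (ε / 2) |>.comp (tendsto_add_atTop_nat 1) |>.congr
      fun j => by simp
  · refine Eventually.of_forall fun j => ?_
    have hj : 0 < ε / 2 / ((j : ℝ) + 1) := by positivity
    have hj' : ε / 2 / ((j : ℝ) + 1) < ε := by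
      rw [div_lt_iff₀ (by positivity)]
      have : (0 : ℝ) ≤ j := by positivity
      nlinarith
    refine le_trans (le_of_eq ?_) (hcon _ hj hj')
    refine setIntegral_congr_fun measurableSet_Ioc fun t ht => ?_
    exact Real.norm_of_nonneg (h.div_pos (hj.trans ht.1) _).le

/-- For every `γ > 0` there is a balancing point `l`; it exists by the intermediate value
theorem, because the tail integral blows up as `l → 0⁺` and vanishes at `l = ε`. -/
lemma exists_balance {γ : ℝ} (hγ : 0 < γ) :
    ∃ l, 0 < l ∧ l ≤ ε ∧ γ * ∫ t in Set.Ioc l ε, φ t / t ^ (k + 2) =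
      ∫ t in Set.Ioc 0 l, φ t / t ^ (k + 1) := by
  have hε := h.eps_pos
  obtain ⟨a, ha, haε, hM⟩ := h.exists_tail_gt ((∫ t in Set.Ioc 0 ε, φ t / t ^ (k + 1)) / γ)
  rw [div_lt_iff₀ hγ] at hM
  -- both integrals are continuous in `l` on `[a, ε]`
  have hI2 : IntervalIntegrable (fun t => φ t / t ^ (k + 2)) volume a ε := by
    rw [intervalIntegrable_iff_integrableOn_Ioc_of_le haε.le]
    exact integrableOn_div_pow h.cont _ ha _
  have hI1 : IntervalIntegrable (fun t => φ t / t ^ (k + 1)) volume 0 ε := by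
    rw [intervalIntegrable_iff_integrableOn_Ioc_of_le hε.le]
    exact h.int
  have hc2 : ContinuousOn (fun l => ∫ t in l..ε, φ t / t ^ (k + 2)) (Set.Icc a ε) := by
    have := intervalIntegral.continuousOn_primitive_interval_left (μ := volume)
      (f := fun t => φ t / t ^ (k + 2)) (a := a) (b := ε) (by
        rw [Set.uIcc_of_le haε.le, integrableOn_Icc_iff_integrableOn_Ioc]
        exact integrableOn_div_pow h.cont _ ha _)
    rwa [Set.uIcc_of_le haε.le] at this
  have hc1 : ContinuousOn (fun l => ∫ t in (0 : ℝ)..l, φ t / t ^ (k + 1)) (Set.Icc a ε) := by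
    have := intervalIntegral.continuousOn_primitive_interval (μ := volume)
      (f := fun t => φ t / t ^ (k + 1)) (a := 0) (b := ε) (by
        rw [Set.uIcc_of_le hε.le, integrableOn_Icc_iff_integrableOn_Ioc]
        exact h.int)
    rw [Set.uIcc_of_le hε.le] at this
    exact this.mono (Set.Icc_subset_Icc_left ha.le)
  have hd : ContinuousOn (fun l => γ * (∫ t in l..ε, φ t / t ^ (k + 2)) -
      ∫ t in (0 : ℝ)..l, φ t / t ^ (k + 1)) (Set.Icc a ε) :=
    (continuousOn_const.mul hc2).sub hc1
  have hmem : (0 : ℝ) ∈ Set.Icc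
      (γ * (∫ t in ε..ε, φ t / t ^ (k + 2)) - ∫ t in (0 : ℝ)..ε, φ t / t ^ (k + 1))
      (γ * (∫ t in a..ε, φ t / t ^ (k + 2)) - ∫ t in (0 : ℝ)..a, φ t / t ^ (k + 1)) := by
    constructor
    · rw [intervalIntegral.integral_same, intervalIntegral.integral_of_le hε.le]
      have := h.int_pos hε le_rfl
      linarith
    · rw [intervalIntegral.integral_of_le haε.le, intervalIntegral.integral_of_le ha.le]
      have h1 : ∫ t in Set.Ioc 0 a, φ t / t ^ (k + 1) ≤ ∫ t in Set.Ioc 0 ε, φ t / t ^ (k + 1) :=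
        setIntegral_mono_set h.int (by
          filter_upwards [ae_restrict_mem measurableSet_Ioc] with t ht
          exact (h.div_pos ht.1 _).le)
          (Set.Ioc_subset_Ioc_right haε.le).eventuallyLE
      linarith
  obtain ⟨l, hl, hl0⟩ := intermediate_value_Icc' haε.le hd hmem
  have hl0' : 0 < l := ha.trans_le hl.1
  refine ⟨l, hl0', hl.2, ?_⟩
  simp only [intervalIntegral.integral_of_le hl.2, intervalIntegral.integral_of_le hl0'.le] at hl0
  linarith

/-- The equivalences of `ϖ_*` with the two balanced integrals. -/
lemma exists_L : ∃ L : ℝ → ℝ,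
    Tendsto L (nhdsWithin 0 (Set.Ioi 0)) (nhdsWithin 0 (Set.Ioi 0)) ∧
    EquivNearZero (critMod φ ε k)
      (fun γ => γ * ∫ t in Set.Ioc (L γ) ε, φ t / t ^ (k + 2)) ∧
    EquivNearZero
      (fun γ => γ * ∫ t in Set.Ioc (L γ) ε, φ t / t ^ (k + 2))
      (fun γ => ∫ t in Set.Ioc 0 (L γ), φ t / t ^ (k + 1)) := by
  have hex : ∀ γ : ℝ, ∃ l, 0 < γ → 0 < l ∧ l ≤ ε ∧
      γ * ∫ t in Set.Ioc l ε, φ t / t ^ (k + 2) = ∫ t in Set.Ioc 0 l, φ t / t ^ (k + 1) := by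
    intro γ
    by_cases hγ : 0 < γ
    · obtain ⟨l, hl⟩ := h.exists_balance hγ
      exact ⟨l, fun _ => hl⟩
    · exact ⟨0, fun h => absurd h hγ⟩
  choose L hL using hex
  have hlow : ∀ γ, 0 < γ → ∫ t in Set.Ioc 0 (L γ), φ t / t ^ (k + 1) ≤ critMod φ ε k γ := by
    intro γ hγ
    obtain ⟨h1, h2, h3⟩ := hL γ hγ
    have := h.min_le_critMod hγ.le h1 h2
    rwa [h3, min_self] at this
  refine ⟨L, ?_, ⟨1, one_pos, 2, two_pos, ?_⟩, ⟨1, one_pos, 1, one_pos, ?_⟩⟩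
  · refine tendsto_nhdsWithin_iff.2 ⟨?_, ?_⟩
    · -- if `η ≤ L γ` then `∫₀^η φ(t) t^{-k-1} dt ≤ ϖ_*(γ)`, impossible for small `γ`
      rw [Metric.tendsto_nhds]
      intro η hη
      have hη' : 0 < min η ε := lt_min hη h.eps_pos
      have hpos := h.int_pos hη' (min_le_right _ _)
      filter_upwards [h.tendsto_critMod.eventually (gt_mem_nhds hpos), self_mem_nhdsWithin]
        with γ h1 hγ
      obtain ⟨h2, h3, -⟩ := hL γ hγ
      rw [Real.dist_eq, sub_zero, abs_of_pos h2]
      by_contra! hcon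
      have hle : ∫ t in Set.Ioc 0 (min η ε), φ t / t ^ (k + 1) ≤
          ∫ t in Set.Ioc 0 (L γ), φ t / t ^ (k + 1) :=
        setIntegral_mono_set (h.int.mono_set (Set.Ioc_subset_Ioc_right h3)) (by
          filter_upwards [ae_restrict_mem measurableSet_Ioc] with t ht
          exact (h.div_pos ht.1 _).le)
          (Set.Ioc_subset_Ioc_right ((min_le_left _ _).trans hcon)).eventuallyLE
      exact absurd (hle.trans (hlow γ hγ)) (not_le.2 h1)
    · filter_upwards [self_mem_nhdsWithin] with γ hγ using (hL γ hγ).1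
  · filter_upwards [self_mem_nhdsWithin] with γ hγ
    obtain ⟨h1, h2, h3⟩ := hL γ hγ
    have h4 := h.critMod_le (le_of_lt hγ) h1 h2
    have h5 := hlow γ hγ
    rw [h3] at h4 ⊢
    constructor <;> linarith
  · filter_upwards [self_mem_nhdsWithin] with γ hγ
    rw [(hL γ hγ).2.2]
    simp

end IsRate

/-! ### Dyadic sums and membership in the space `C_{k,ϖ}` -/

namespace IsRate

variable {φ : ℝ → ℝ} {ε : ℝ} {k : ℕ} (h : IsRate φ ε k)

include h

/-- Each dyadic term is dominated by the integral defining `ϖ_*` over `(r, 2r]`. -/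
lemma dyadic_term_le {r γ : ℝ} (hr : 0 < r) (hrε : 2 * r ≤ ε) (hγ : 0 ≤ γ) :
    φ r / r ^ k * min 1 (γ / r) ≤
      2 ^ (k + 2) * ∫ t in Set.Ioc r (2 * r), φ t / t ^ (k + 1) * min 1 (γ / t) := by
  have hφ := h.pos r hr
  have hm0 : 0 ≤ min 1 (γ / r) := le_min zero_le_one (by positivity)
  have hint : IntegrableOn (fun t => φ t / t ^ (k + 1) * min 1 (γ / t)) (Set.Ioc r (2 * r)) :=
    (h.integrable_integrand hγ).mono_set (Set.Ioc_subset_Ioc hr.le hrε)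
  have hle : ∫ _ in Set.Ioc r (2 * r), φ r / (2 * r) ^ (k + 1) * (min 1 (γ / r) / 2) ≤
      ∫ t in Set.Ioc r (2 * r), φ t / t ^ (k + 1) * min 1 (γ / t) := by
    refine setIntegral_mono_on (integrableOn_const (by simp)) hint measurableSet_Ioc
      fun t ht => ?_
    have ht0 : 0 < t := hr.trans ht.1
    have h1 : φ r ≤ φ t := h.mono hr.le ht0.le ht.1.le
    have h2 : min 1 (γ / r) / 2 ≤ min 1 (γ / t) := by
      refine le_min ?_ ?_
      · have := min_le_left 1 (γ / r)
        linarith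
      · calc min 1 (γ / r) / 2 ≤ γ / r / 2 := by gcongr; exact min_le_right _ _
          _ = γ / (2 * r) := by field_simp
          _ ≤ γ / t := by gcongr; exact ht.2
    have hφt := h.pos t ht0
    gcongr
    exact ht.2
  rw [setIntegral_const] at hle
  have hvol : volume.real (Set.Ioc r (2 * r)) = r := by
    rw [Real.volume_real_Ioc_of_le (by linarith)]; ring
  rw [hvol, smul_eq_mul] at hle
  calc φ r / r ^ k * min 1 (γ / r)
      = 2 ^ (k + 2) * (r * (φ r / (2 * r) ^ (k + 1) * (min 1 (γ / r) / 2))) := by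
        rw [mul_pow, pow_succ r k, pow_succ (2 : ℝ) (k + 1)]
        field_simp
    _ ≤ _ := by gcongr

lemma dyadic_sum_le {γ : ℝ} (hγ : 0 ≤ γ) (N : ℕ) :
    ∑ ν ∈ Finset.range N, φ (ε / 2 ^ (ν + 1)) / (ε / 2 ^ (ν + 1)) ^ k *
      min 1 (γ / (ε / 2 ^ (ν + 1))) ≤ 2 ^ (k + 2) * critMod φ ε k γ := by
  have hε := h.eps_pos
  have hN : ∀ N : ℕ, ε / 2 ^ N ≤ ε := fun N => div_le_self hε.le (one_le_pow₀ one_le_two)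
  have key : ∑ ν ∈ Finset.range N, φ (ε / 2 ^ (ν + 1)) / (ε / 2 ^ (ν + 1)) ^ k *
      min 1 (γ / (ε / 2 ^ (ν + 1))) ≤
      2 ^ (k + 2) * ∫ t in Set.Ioc (ε / 2 ^ N) ε, φ t / t ^ (k + 1) * min 1 (γ / t) := by
    induction N with
    | zero => simp
    | succ N ih =>
      have hr : 0 < ε / 2 ^ (N + 1) := by positivity
      have h2r : 2 * (ε / 2 ^ (N + 1)) = ε / 2 ^ N := by rw [pow_succ]; field_simp
      have hterm := h.dyadic_term_le hr (h2r.le.trans (hN N)) hγ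
      rw [h2r] at hterm
      have hi := (h.integrable_integrand hγ).mono_set (Set.Ioc_subset_Ioc_left (b := ε) hr.le)
      have hsub : ε / 2 ^ (N + 1) ≤ ε / 2 ^ N := by linarith
      rw [← Set.Ioc_union_Ioc_eq_Ioc hsub (hN N)] at hi ⊢
      rw [setIntegral_union (Set.Ioc_disjoint_Ioc_of_le le_rfl) measurableSet_Ioc
        (hi.mono_set Set.subset_union_left) (hi.mono_set Set.subset_union_right),
        Finset.sum_range_succ, mul_add, add_comm]
      exact add_le_add hterm ih
  refine key.trans ?_
  rw [h.critMod_split hγ (l := ε / 2 ^ N) (by positivity) (hN N)]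
  have := h.low_nonneg (l := ε / 2 ^ N) hγ
  gcongr
  linarith

lemma dyadic_nonneg {γ : ℝ} (hγ : 0 ≤ γ) (ν : ℕ) :
    0 ≤ φ (ε / 2 ^ (ν + 1)) / (ε / 2 ^ (ν + 1)) ^ k * min 1 (γ / (ε / 2 ^ (ν + 1))) := by
  have hε := h.eps_pos
  have hr : 0 < ε / 2 ^ (ν + 1) := by positivity
  exact mul_nonneg (h.div_pos hr k).le (le_min zero_le_one (by positivity))

lemma dyadic_summable {γ : ℝ} (hγ : 0 ≤ γ) :
    Summable fun ν : ℕ => φ (ε / 2 ^ (ν + 1)) / (ε / 2 ^ (ν + 1)) ^ k *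
      min 1 (γ / (ε / 2 ^ (ν + 1))) :=
  summable_of_sum_range_le (h.dyadic_nonneg hγ) (h.dyadic_sum_le hγ)

/-- A series dominated termwise by the dyadic terms at distance `γ` is of size `O(ϖ_*(γ))`. -/
lemma norm_tsum_le_critMod {E : Type*} [NormedAddCommGroup E] {a : ℕ → E} {K γ : ℝ}
    (hγ : 0 ≤ γ) (hK : 0 ≤ K)
    (ha : ∀ ν, ‖a ν‖ ≤ K * (φ (ε / 2 ^ (ν + 1)) / (ε / 2 ^ (ν + 1)) ^ k *
      min 1 (γ / (ε / 2 ^ (ν + 1))))) :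
    ‖∑' ν, a ν‖ ≤ K * (2 ^ (k + 2) * critMod φ ε k γ) := by
  refine (tsum_of_norm_bounded ((h.dyadic_summable hγ).hasSum.mul_left K) ha).trans ?_
  gcongr
  exact Real.tsum_le_of_sum_range_le (h.dyadic_nonneg hγ) (h.dyadic_sum_le hγ)

/-- A series of functions whose derivatives up to order `k + 1` obey Cauchy-type bounds at the
dyadic scales sums to a member of `C_{k, ϖ_*}`: each increment is estimated both trivially and by
the mean value inequality, which produces the factor `min(1, γ/r_ν)`. -/
lemma memCk_tsum {n : ℕ} {C : ℝ} (hC : 0 ≤ C) {g : ℕ → (Fin n → ℝ) → ℝ}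
    (hg : ∀ ν, ∀ m ≤ k + 1, ContDiff ℝ m (g ν) ∧
      ∀ x, ‖iteratedFDeriv ℝ m (g ν) x‖ ≤ C * φ (ε / 2 ^ (ν + 1)) / (ε / 2 ^ (ν + 1)) ^ m) :
    MemCk k ε (critMod φ ε k) (fun x => ∑' ν, g ν x) := by
  have hε := h.eps_pos
  have hr : ∀ ν : ℕ, 0 < ε / 2 ^ (ν + 1) := fun ν => by positivity
  have hrε : ∀ ν : ℕ, ε / 2 ^ (ν + 1) ≤ ε := fun ν =>
    div_le_self hε.le (one_le_pow₀ one_le_two)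
  -- lowering the order of differentiation costs at most a power of `ε`
  have hlow : ∀ p ≤ k, ∀ ν : ℕ, φ (ε / 2 ^ (ν + 1)) / (ε / 2 ^ (ν + 1)) ^ p ≤
      ε ^ (k - p) * (φ (ε / 2 ^ (ν + 1)) / (ε / 2 ^ (ν + 1)) ^ k) := by
    intro p hp ν
    have hφ := h.pos _ (hr ν)
    have h1 : φ (ε / 2 ^ (ν + 1)) / (ε / 2 ^ (ν + 1)) ^ p =
        (ε / 2 ^ (ν + 1)) ^ (k - p) * (φ (ε / 2 ^ (ν + 1)) / (ε / 2 ^ (ν + 1)) ^ k) := by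
      have h3 : (ε / 2 ^ (ν + 1)) ^ k =
          (ε / 2 ^ (ν + 1)) ^ (k - p) * (ε / 2 ^ (ν + 1)) ^ p := by
        rw [← pow_add, Nat.sub_add_cancel hp]
      have hrν := hr ν
      generalize ε / 2 ^ (ν + 1) = r at *
      rw [h3]
      field_simp
    rw [h1]
    have := (h.div_pos (hr ν) k).le
    have := (hr ν).le
    gcongr
    exact hrε ν
  have hsup : ∀ p ≤ k, ∀ (ν : ℕ) x, ‖iteratedFDeriv ℝ p (g ν) x‖ ≤
      C * ε ^ (k - p) * (φ (ε / 2 ^ (ν + 1)) / (ε / 2 ^ (ν + 1)) ^ k *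
        min 1 (ε / (ε / 2 ^ (ν + 1)))) := by
    intro p hp ν x
    have h1 : min 1 (ε / (ε / 2 ^ (ν + 1))) = 1 :=
      min_eq_left ((one_le_div (hr ν)).2 (hrε ν))
    rw [h1, mul_one]
    calc _ ≤ C * φ (ε / 2 ^ (ν + 1)) / (ε / 2 ^ (ν + 1)) ^ p := (hg ν p (by omega)).2 x
      _ = C * (φ (ε / 2 ^ (ν + 1)) / (ε / 2 ^ (ν + 1)) ^ p) := by ring
      _ ≤ C * (ε ^ (k - p) * (φ (ε / 2 ^ (ν + 1)) / (ε / 2 ^ (ν + 1)) ^ k)) := by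
        gcongr; exact hlow p hp ν
      _ = _ := by ring
  have hdiff : ∀ p ≤ k, ∀ (ν : ℕ) x y,
      ‖iteratedFDeriv ℝ p (g ν) x - iteratedFDeriv ℝ p (g ν) y‖ ≤
      2 * C * ε ^ (k - p) * (φ (ε / 2 ^ (ν + 1)) / (ε / 2 ^ (ν + 1)) ^ k *
        min 1 (dist x y / (ε / 2 ^ (ν + 1)))) := by
    intro p hp ν x y
    have hb := (hg ν p (by omega)).2
    have hcd := (hg ν (p + 1) (by omega)).1
    have hb1 := (hg ν (p + 1) (by omega)).2
    have hφ := h.pos _ (hr ν)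
    have hrν := hr ν
    have hl := hlow p hp ν
    set r := ε / 2 ^ (ν + 1) with hrdef
    have h1 : ‖iteratedFDeriv ℝ p (g ν) x - iteratedFDeriv ℝ p (g ν) y‖ ≤
        2 * C * (φ r / r ^ p) * 1 := by
      calc _ ≤ C * φ r / r ^ p + C * φ r / r ^ p :=
            (norm_sub_le _ _).trans (add_le_add (hb x) (hb y))
        _ = _ := by ring
    have h2 : ‖iteratedFDeriv ℝ p (g ν) x - iteratedFDeriv ℝ p (g ν) y‖ ≤
        2 * C * (φ r / r ^ p) * (dist x y / r) := by
      have hd : Differentiable ℝ (iteratedFDeriv ℝ p (g ν)) :=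
        hcd.differentiable_iteratedFDeriv (by exact_mod_cast Nat.lt_succ_self p)
      have := convex_univ.norm_image_sub_le_of_norm_fderiv_le (𝕜 := ℝ)
        (f := iteratedFDeriv ℝ p (g ν)) (C := C * φ r / r ^ (p + 1)) (x := y) (y := x)
        (fun z _ => hd z)
        (fun z _ => by rw [norm_fderiv_iteratedFDeriv]; exact hb1 z) trivial trivial
      rw [← dist_eq_norm x y] at this
      calc _ ≤ C * φ r / r ^ (p + 1) * dist x y := this
        _ = 1 * (C * (φ r / r ^ p) * (dist x y / r)) := by rw [pow_succ]; field_simp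
        _ ≤ 2 * (C * (φ r / r ^ p) * (dist x y / r)) := by gcongr; norm_num
        _ = _ := by ring
    have h3 : ‖iteratedFDeriv ℝ p (g ν) x - iteratedFDeriv ℝ p (g ν) y‖ ≤
        2 * C * (φ r / r ^ p) * min 1 (dist x y / r) := by
      rcases min_choice 1 (dist x y / r) with hc | hc <;> rw [hc] <;> assumption
    have hm0 : 0 ≤ min 1 (dist x y / r) := le_min zero_le_one (by positivity)
    calc _ ≤ 2 * C * (φ r / r ^ p) * min 1 (dist x y / r) := h3
      _ ≤ 2 * C * (ε ^ (k - p) * (φ r / r ^ k)) * min 1 (dist x y / r) := by gcongr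
      _ = _ := by ring
  have hcd : ∀ ν, ContDiff ℝ ((k : ℕ∞) : WithTop ℕ∞) (g ν) := fun ν => by
    exact_mod_cast (hg ν k (by omega)).1
  have hsum : ∀ p : ℕ, (p : ℕ∞) ≤ (k : ℕ∞) → Summable fun ν : ℕ =>
      C * ε ^ (k - p) * (φ (ε / 2 ^ (ν + 1)) / (ε / 2 ^ (ν + 1)) ^ k *
        min 1 (ε / (ε / 2 ^ (ν + 1)))) := fun p _ => (h.dyadic_summable hε.le).mul_left _
  have hsup' : ∀ (p : ℕ) (ν : ℕ) (x : Fin n → ℝ), (p : ℕ∞) ≤ (k : ℕ∞) →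
      ‖iteratedFDeriv ℝ p (g ν) x‖ ≤
      C * ε ^ (k - p) * (φ (ε / 2 ^ (ν + 1)) / (ε / 2 ^ (ν + 1)) ^ k *
        min 1 (ε / (ε / 2 ^ (ν + 1)))) := fun p ν x hp => hsup p (by exact_mod_cast hp) ν x
  have hF : ContDiff ℝ k (fun x => ∑' ν, g ν x) := by
    exact_mod_cast contDiff_tsum hcd hsum hsup'
  refine ⟨hF, fun α hα => ?_⟩
  have hαk : ∑ j, α j ≤ k := (Finset.mem_filter.1 hα).2
  obtain ⟨T, hT⟩ := exists_mderivR_eq hF α hαk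
  have hD : ∀ x, iteratedFDeriv ℝ (∑ j, α j) (fun x => ∑' ν, g ν x) x =
      ∑' ν, iteratedFDeriv ℝ (∑ j, α j) (g ν) x := fun x =>
    iteratedFDeriv_tsum_apply hcd hsum hsup' (by exact_mod_cast hαk) x
  have hS : ∀ x, Summable fun ν => iteratedFDeriv ℝ (∑ j, α j) (g ν) x := fun x =>
    Summable.of_norm_bounded (hsum (∑ j, α j) (by exact_mod_cast hαk)) fun ν => hsup _ hαk ν x
  rw [hT]
  constructor
  · refine ⟨‖T‖ * (C * ε ^ (k - ∑ j, α j) * (2 ^ (k + 2) * critMod φ ε k ε)), ?_⟩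
    rintro _ ⟨x, rfl⟩
    refine (T.le_opNorm _).trans ?_
    gcongr
    rw [hD]
    exact h.norm_tsum_le_critMod hε.le (by positivity) fun ν => hsup _ hαk ν x
  · refine ⟨‖T‖ * (2 * C * ε ^ (k - ∑ j, α j) * 2 ^ (k + 2)), ?_⟩
    rintro _ ⟨x, y, hxy, -, rfl⟩
    rw [div_le_iff₀ (h.critMod_pos hxy), ← map_sub]
    refine (T.le_opNorm _).trans ?_
    rw [mul_assoc]
    gcongr
    rw [hD, hD, ← (hS x).tsum_sub (hS y), mul_assoc]
    exact h.norm_tsum_le_critMod hxy.le (by positivity) fun ν => hdiff _ hαk ν x y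

end IsRate

/-! ### The iteration theorem -/

/-- iteration theorem on regularity without Hölder's type. If `f : ℝⁿ → ℝ`
is the limit of bounded holomorphic functions `F ν` on the strips `|Im x| ≤ r_ν = ε 2^{-ν}`
(real valued on `ℝⁿ`) with `F 0 = 0` and `|F ν - F (ν-1)| ≤ φ(r_ν)` on the `ν`-th strip,
and `k_*` is critical for `φ` (`∫₀¹ φ/x^{k_*+1} < ∞`, `∫₀¹ φ/x^{k_*+2} = ∞`), then
`f ∈ C_{k_*,ϖ_*}(ℝⁿ)` for a modulus of continuity `ϖ_*` which can be chosen so that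
`ϖ_*(γ) ∼ γ ∫_{L(γ)}^ε φ(t)/t^{k_*+2} dt = 𝒪^#(∫₀^{L(γ)} φ(t)/t^{k_*+1} dt)` for some
`L(γ) → 0⁺`. -/
theorem regularity_iteration (n : ℕ) (hn : 0 < n) (ε : ℝ) (hε : 0 < ε)
    (φ : ℝ → ℝ) (hφmono : MonotoneOn φ (Set.Ici 0))
    (hφcont : ContinuousOn φ (Set.Ici 0)) (hφ0 : φ 0 = 0)
    (f : (Fin n → ℝ) → ℝ) (F : ℕ → (Fin n → ℂ) → ℂ)
    (hhol : ∀ ν : ℕ,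
      DifferentiableOn ℂ (F ν) {x : Fin n → ℂ | ‖imPart x‖ ≤ ε / 2 ^ ν})
    (hbdd : ∀ ν : ℕ,
      BddAbove ((fun x => ‖F ν x‖) '' {x : Fin n → ℂ | ‖imPart x‖ ≤ ε / 2 ^ ν}))
    (hreal : ∀ (ν : ℕ) (x : Fin n → ℝ), (F ν (cplx x)).im = 0)
    (hF0 : F 0 = 0)
    (hclose : ∀ ν : ℕ, 1 ≤ ν → ∀ x : Fin n → ℂ, ‖imPart x‖ ≤ ε / 2 ^ ν →
      ‖F ν x - F (ν - 1) x‖ ≤ φ (ε / 2 ^ ν))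
    (hlim : ∀ x : Fin n → ℝ,
      Tendsto (fun ν => (F ν (cplx x)).re) atTop (nhds (f x)))
    (ks : ℕ)
    (hconv : IntegrableOn (fun x : ℝ => φ x / x ^ (ks + 1)) (Set.Ioc 0 1))
    (hdiv : ¬ IntegrableOn (fun x : ℝ => φ x / x ^ (ks + 2)) (Set.Ioc 0 1)) :
    ∃ (δs : ℝ) (ϖs : ℝ → ℝ), IsModulus δs ϖs ∧ MemCk ks δs ϖs f ∧
      ∃ L : ℝ → ℝ,
        Tendsto L (nhdsWithin 0 (Set.Ioi 0)) (nhdsWithin 0 (Set.Ioi 0)) ∧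
        EquivNearZero ϖs
          (fun γ => γ * ∫ t in Set.Ioc (L γ) ε, φ t / t ^ (ks + 2)) ∧
        EquivNearZero
          (fun γ => γ * ∫ t in Set.Ioc (L γ) ε, φ t / t ^ (ks + 2))
          (fun γ => ∫ t in Set.Ioc 0 (L γ), φ t / t ^ (ks + 1)) := by
  have h : IsRate φ ε ks := isRate_of hε hφmono hφcont hφ0 hconv hdiv
  obtain ⟨C, hC, hCauchy⟩ := exists_cauchy_const_re n (ks + 1)
  have hG : ∀ ν : ℕ, ∀ m ≤ ks + 1,
      ContDiff ℝ m (fun x : Fin n → ℝ => (F (ν + 1) (cplx x) - F ν (cplx x)).re) ∧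
      ∀ x, ‖iteratedFDeriv ℝ m
        (fun x : Fin n → ℝ => (F (ν + 1) (cplx x) - F ν (cplx x)).re) x‖ ≤
          C * φ (ε / 2 ^ (ν + 1)) / (ε / 2 ^ (ν + 1)) ^ m := by
    intro ν m hm
    have hr : 0 < ε / 2 ^ (ν + 1) := by positivity
    refine hCauchy (fun z => F (ν + 1) z - F ν z) (ε / 2 ^ (ν + 1)) (φ (ε / 2 ^ (ν + 1))) hr
      (h.pos _ hr).le ?_ ?_ m hm
    · refine ((hhol (ν + 1)).mono fun z hz =>
        (show ‖imPart z‖ < ε / 2 ^ (ν + 1) from hz).le).sub ((hhol ν).mono fun z hz => ?_)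
      have h1 : ε / 2 ^ (ν + 1) ≤ ε / 2 ^ ν := by gcongr <;> norm_num
      exact ((show ‖imPart z‖ < ε / 2 ^ (ν + 1) from hz).trans_le h1).le
    · intro z hz
      exact hclose (ν + 1) (by omega) z (le_of_lt hz)
  -- the telescoping series sums to `f`
  have hf : f = fun x => ∑' ν, (F (ν + 1) (cplx x) - F ν (cplx x)).re := by
    funext x
    have hs : Summable fun ν : ℕ => (F (ν + 1) (cplx x) - F ν (cplx x)).re := by
      refine Summable.of_norm_bounded
        ((h.dyadic_summable hε.le).mul_left (C * ε ^ ks)) fun ν => ?_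
      have hr : 0 < ε / 2 ^ (ν + 1) := by positivity
      have hrε : ε / 2 ^ (ν + 1) ≤ ε := div_le_self hε.le (one_le_pow₀ one_le_two)
      have h1 : min 1 (ε / (ε / 2 ^ (ν + 1))) = 1 := min_eq_left ((one_le_div hr).2 hrε)
      have h2 := (hG ν 0 (by omega)).2 x
      rw [norm_iteratedFDeriv_zero, pow_zero, div_one] at h2
      have hφ := h.pos _ hr
      rw [h1, mul_one]
      refine h2.trans ?_
      rw [mul_assoc]
      gcongr
      rw [← mul_div_assoc, le_div_iff₀ (by positivity), mul_comm]
      gcongr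
    have ht := hs.hasSum.tendsto_sum_nat
    have hsum : ∀ N : ℕ, ∑ ν ∈ Finset.range N, (F (ν + 1) (cplx x) - F ν (cplx x)).re =
        (F N (cplx x)).re := by
      intro N
      simp only [Complex.sub_re]
      rw [Finset.sum_range_sub (fun ν => (F ν (cplx x)).re), hF0]
      simp
    simp only [hsum] at ht
    exact tendsto_nhds_unique (hlim x) ht
  refine ⟨ε, critMod φ ε ks, h.isModulus, ?_, h.exists_L⟩
  rw [hf]
  exact h.memCk_tsum hC hG
end
end

section
/- (Moment identities for the approximation kernel.) Let K̂ ∈ C_c^∞(ℝⁿ) be supported in |ξ| ≤ 1, with K̂(ξ) = K̂(−ξ) and ∂^α K̂(0) = 1 for α = 0 and ∂^α K̂(0) = 0 for all multi-indices α ≠ 0, and let K(z) = (2π)^{−n} ∫_{ℝⁿ} K̂(ξ) e^{i⟨z,ξ⟩} dξ be the associated entire function on ℂⁿ. Then for all u, v ∈ ℝⁿ and all multi-indices α, β ∈ ℕⁿ: ∫_{ℝⁿ} (u + iv)^α ∂^β K(u + iv) du = (−1)^{|α|} α! if α = β, and = 0 if α ≠ β. -/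
/-! On test functions `h`, the Fourier–Laplace transform `h ↦ (2π)⁻ⁿ ∫ h(ξ) e^{i⟨z,ξ⟩} dξ` turns
multiplication by `iξ_j` into `∂/∂z_j` (`pderivC_fourierLaplace`, differentiation under the
integral) and `i∂/∂ξ_j` into multiplication by `z_j` (`coord_mul_fourierLaplace`, integration by
parts). Hence `z^α ∂^β K(z)` is `i^{|α|+|β|}` times the transform of `∂^α (ξ^β K̂)`.

The integral of such a transform over a slice `ℝⁿ + iv` is the value of the function at the origin
(`integral_fourierLaplace`): the shift multiplies `h` by `e^{-⟨v,ξ⟩}`, and Fourier inversion for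
Schwartz functions applies. So the moment equals `i^{|α|+|β|} ∂^α (ξ^β K̂)(0)`.

Finally `K̂ - 1` vanishes to infinite order at the origin, so the commutation relation
`[∂^α, ξ_k] = α_k ∂^{α - e_k}` gives `∂^α (ξ^β K̂)(0) = α!` for `α = β` and `0` otherwise
(`mderivR_monomial_mul_zero`), and `i^{2|α|} = (-1)^{|α|}`. -/

open scoped BigOperators
open MeasureTheory Filter

noncomputable section

open scoped ContDiff FourierTransform

/-- The space `C_c^∞(ℝⁿ, ℂ)`, as a predicate. -/
def IsTest {n : ℕ} (h : (Fin n → ℝ) → ℂ) : Prop :=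
  ContDiff ℝ ∞ h ∧ HasCompactSupport h

/-- The Fourier–Laplace transform `(2π)⁻ⁿ ∫ h(ξ) e^{i⟨z,ξ⟩} dξ`, with bilinear pairing
`⟨z,ξ⟩ = Σ z_j ξ_j` for complex `z`. -/
def fourierLaplace {n : ℕ} (h : (Fin n → ℝ) → ℂ) (z : Fin n → ℂ) : ℂ :=
  (((2 * Real.pi) ^ n : ℝ) : ℂ)⁻¹ *
    ∫ ξ : Fin n → ℝ, h ξ * Complex.exp (Complex.I * ∑ j, z j * (ξ j : ℂ))

/-- Iterated coordinate derivatives along a list of coordinates; `mderivR` is the case of the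
list of all coordinates. -/
def derivList {n : ℕ} (l : List (Fin n)) (α : Fin n → ℕ) (f : (Fin n → ℝ) → ℂ) :
    (Fin n → ℝ) → ℂ :=
  l.foldr (fun j g => (pderivR j)^[α j] g) f

/-! ### Coordinate derivatives of smooth functions -/

lemma contDiff_pderivR {n : ℕ} {h : (Fin n → ℝ) → ℂ} (hh : ContDiff ℝ ∞ h) (j : Fin n) :
    ContDiff ℝ ∞ (pderivR j h) :=
  (hh.fderiv_right (m := ∞) le_rfl).clm_apply contDiff_const

lemma contDiff_iter_pderivR {n : ℕ} {h : (Fin n → ℝ) → ℂ} (hh : ContDiff ℝ ∞ h) (j : Fin n)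
    (m : ℕ) : ContDiff ℝ ∞ ((pderivR j)^[m] h) := by
  induction m with
  | zero => exact hh
  | succ m ih => rw [Function.iterate_succ_apply']; exact contDiff_pderivR ih j

lemma contDiff_derivList {n : ℕ} {h : (Fin n → ℝ) → ℂ} (hh : ContDiff ℝ ∞ h)
    (l : List (Fin n)) (α : Fin n → ℕ) : ContDiff ℝ ∞ (derivList l α h) := by
  induction l with
  | nil => exact hh
  | cons j l ih => exact contDiff_iter_pderivR ih j _

lemma contDiff_coord_mul {n : ℕ} {h : (Fin n → ℝ) → ℂ} (hh : ContDiff ℝ ∞ h) (k : Fin n) :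
    ContDiff ℝ ∞ (fun ξ : Fin n → ℝ => (ξ k : ℂ) * h ξ) :=
  (Complex.ofRealCLM.contDiff.comp (contDiff_apply ℝ ℝ k)).mul hh

lemma isTest_pderivR {n : ℕ} {h : (Fin n → ℝ) → ℂ} (hh : IsTest h) (j : Fin n) :
    IsTest (pderivR j h) :=
  ⟨contDiff_pderivR hh.1 j, hh.2.fderiv_apply (𝕜 := ℝ) _⟩

lemma isTest_iter_pderivR {n : ℕ} {h : (Fin n → ℝ) → ℂ} (hh : IsTest h) (j : Fin n) (m : ℕ) :
    IsTest ((pderivR j)^[m] h) := by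
  induction m with
  | zero => exact hh
  | succ m ih => rw [Function.iterate_succ_apply']; exact isTest_pderivR ih j

lemma isTest_derivList {n : ℕ} {h : (Fin n → ℝ) → ℂ} (hh : IsTest h)
    (l : List (Fin n)) (α : Fin n → ℕ) : IsTest (derivList l α h) := by
  induction l with
  | nil => exact hh
  | cons j l ih => exact isTest_iter_pderivR ih j _

lemma isTest_coord_mul {n : ℕ} {h : (Fin n → ℝ) → ℂ} (hh : IsTest h) (k : Fin n) :
    IsTest (fun ξ : Fin n → ℝ => (ξ k : ℂ) * h ξ) :=
  ⟨contDiff_coord_mul hh.1 k, hh.2.mul_left⟩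

lemma isTest_const_mul {n : ℕ} {h : (Fin n → ℝ) → ℂ} (hh : IsTest h) (c : ℂ) :
    IsTest (fun ξ => c * h ξ) :=
  ⟨contDiff_const.mul hh.1, hh.2.mul_left⟩

/-! ### The commutation relation `[∂^α, ξ_k] = α_k ∂^{α - e_k}` -/

/-- The product rule for `ξ_k f + c g`, the shape that reappears each time a derivative is moved
past `ξ_k`; this makes the inductions below close up. -/
lemma pderivR_coord_mul_add {n : ℕ} {f g : (Fin n → ℝ) → ℂ} (hf : ContDiff ℝ ∞ f)
    (hg : ContDiff ℝ ∞ g) (j k : Fin n) (c : ℂ) :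
    pderivR j (fun ξ => (ξ k : ℂ) * f ξ + c * g ξ) =
      fun ξ => (ξ k : ℂ) * pderivR j f ξ + ((if j = k then f ξ else 0) + c * pderivR j g ξ) := by
  funext ξ
  have h1 : HasFDerivAt (fun ξ : Fin n → ℝ => (ξ k : ℂ))
      (Complex.ofRealCLM.comp (ContinuousLinearMap.proj (R := ℝ) k)) ξ :=
    (Complex.ofRealCLM.comp (ContinuousLinearMap.proj (R := ℝ) (φ := fun _ : Fin n => ℝ) k)).hasFDerivAt
  have h2 := (hf.differentiable (by simp) ξ).hasFDerivAt
  have h3 := (hg.differentiable (by simp) ξ).hasFDerivAt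
  have h4 := (h1.mul h2).add (h3.const_mul c)
  have := h4.fderiv
  unfold pderivR
  rw [show (fun ξ : Fin n → ℝ => (ξ k : ℂ) * f ξ + c * g ξ) =
    ((fun ξ : Fin n → ℝ => (ξ k : ℂ)) * f) + (fun ξ => c * g ξ) from rfl, this]
  by_cases hjk : j = k
  · subst hjk; simp; ring
  · simp [hjk, Ne.symm hjk]

lemma iter_pderivR_coord_mul_add_ne {n : ℕ} {f g : (Fin n → ℝ) → ℂ} (hf : ContDiff ℝ ∞ f)
    (hg : ContDiff ℝ ∞ g) {j k : Fin n} (hjk : j ≠ k) (c : ℂ) (m : ℕ) :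
    (pderivR j)^[m] (fun ξ => (ξ k : ℂ) * f ξ + c * g ξ) =
      fun ξ => (ξ k : ℂ) * (pderivR j)^[m] f ξ + c * (pderivR j)^[m] g ξ := by
  induction m with
  | zero => rfl
  | succ m ih =>
    simp only [Function.iterate_succ_apply']
    rw [ih, pderivR_coord_mul_add (contDiff_iter_pderivR hf j m) (contDiff_iter_pderivR hg j m)]
    simp [hjk]

lemma iter_pderivR_coord_mul {n : ℕ} {f : (Fin n → ℝ) → ℂ} (hf : ContDiff ℝ ∞ f)
    (k : Fin n) (m : ℕ) :
    (pderivR k)^[m] (fun ξ => (ξ k : ℂ) * f ξ) =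
      fun ξ => (ξ k : ℂ) * (pderivR k)^[m] f ξ + m * (pderivR k)^[m - 1] f ξ := by
  induction m with
  | zero => simp
  | succ m ih =>
    rw [Function.iterate_succ_apply', ih,
      pderivR_coord_mul_add (contDiff_iter_pderivR hf k m) (contDiff_iter_pderivR hf k (m - 1))]
    funext ξ
    rcases m with _ | m
    · simp
    · simp only [Nat.add_sub_cancel, ← Function.iterate_succ_apply' (pderivR k)]
      simp only [if_true, Nat.succ_eq_add_one]
      push_cast
      ring

lemma derivList_congr {n : ℕ} {l : List (Fin n)} {α β : Fin n → ℕ} (f : (Fin n → ℝ) → ℂ)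
    (h : ∀ j ∈ l, α j = β j) : derivList l α f = derivList l β f := by
  induction l with
  | nil => rfl
  | cons j l ih =>
    have h1 : derivList l α f = derivList l β f := ih fun i hi => h i (List.mem_cons_of_mem _ hi)
    change (pderivR j)^[α j] (derivList l α f) = (pderivR j)^[β j] (derivList l β f)
    rw [h1, h j List.mem_cons_self]

lemma derivList_coord_mul_of_notMem {n : ℕ} {l : List (Fin n)} (α : Fin n → ℕ)
    {f : (Fin n → ℝ) → ℂ} (hf : ContDiff ℝ ∞ f) {k : Fin n} (hk : k ∉ l) :
    derivList l α (fun ξ => (ξ k : ℂ) * f ξ) = fun ξ => (ξ k : ℂ) * derivList l α f ξ := by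
  induction l with
  | nil => rfl
  | cons j l ih =>
    simp only [List.mem_cons, not_or] at hk
    change (pderivR j)^[α j] (derivList l α _) = fun ξ => _ * (pderivR j)^[α j] (derivList l α f) ξ
    rw [ih hk.2]
    have := iter_pderivR_coord_mul_add_ne (contDiff_derivList hf l α) hf (Ne.symm hk.1) 0 (α j)
    simpa using this

/-- Commuting `∂^α` past `ξ_k`. The subtraction `α - e_k` is truncated, which is harmless: when
`α k = 0` its coefficient vanishes. The partial derivatives need not be reordered, since `ξ_k`
interacts only with the single entry `k` of the list. -/
lemma derivList_coord_mul {n : ℕ} {l : List (Fin n)} (hl : l.Nodup) (α : Fin n → ℕ)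
    {f : (Fin n → ℝ) → ℂ} (hf : ContDiff ℝ ∞ f) {k : Fin n} (hk : k ∈ l) :
    derivList l α (fun ξ => (ξ k : ℂ) * f ξ) =
      fun ξ => (ξ k : ℂ) * derivList l α f ξ + α k * derivList l (α - Pi.single k 1) f ξ := by
  induction l with
  | nil => simp at hk
  | cons j l ih =>
    rw [List.nodup_cons] at hl
    change (pderivR j)^[α j] (derivList l α _) = fun ξ =>
      _ * (pderivR j)^[α j] (derivList l α f) ξ +
      _ * (pderivR j)^[(α - Pi.single k 1 : Fin n → ℕ) j] (derivList l (α - Pi.single k 1) f) ξ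
    by_cases hjk : j = k
    · subst hjk
      have h1 : derivList l (α - Pi.single j 1) f = derivList l α f := by
        apply derivList_congr
        intro i hi
        have : i ≠ j := fun h => hl.1 (h ▸ hi)
        simp [this]
      rw [derivList_coord_mul_of_notMem α hf hl.1, h1,
        iter_pderivR_coord_mul (contDiff_derivList hf l α)]
      simp
    · have hk' : k ∈ l := by
        rcases List.mem_cons.1 hk with h | h
        · exact absurd h.symm hjk
        · exact h
      rw [ih hl.2 hk', iter_pderivR_coord_mul_add_ne (contDiff_derivList hf l α)
        (contDiff_derivList hf l _) hjk]
      simp [hjk]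

lemma contDiff_monomial_mul {n : ℕ} {h : (Fin n → ℝ) → ℂ} (hh : ContDiff ℝ ∞ h)
    (β : Fin n → ℕ) : ContDiff ℝ ∞ (fun ξ : Fin n → ℝ => (∏ j, (ξ j : ℂ) ^ β j) * h ξ) := by
  refine ContDiff.mul (contDiff_prod fun j _ => ContDiff.pow ?_ _) hh
  exact Complex.ofRealCLM.contDiff.comp (contDiff_apply ℝ ℝ j)

/-- If `h` agrees with `1` to infinite order at the origin, then `ξ^β h` has at the origin the
same derivatives as the monomial `ξ^β`, namely `∂^α = α!` if `α = β` and `0` otherwise. The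
induction on `N = |β|` peels off one factor `ξ_k` by the commutation relation. -/
lemma mderivR_monomial_mul_zero {n : ℕ} {h : (Fin n → ℝ) → ℂ} (hh : ContDiff ℝ ∞ h)
    (h0 : h 0 = 1) (hflat : ∀ α : Fin n → ℕ, α ≠ 0 → mderivR α h 0 = 0) (N : ℕ) :
    ∀ α β : Fin n → ℕ, ∑ j, β j = N →
      derivList (List.finRange n) α (fun ξ => (∏ j, (ξ j : ℂ) ^ β j) * h ξ) 0 =
        if α = β then ((∏ j, Nat.factorial (α j) : ℕ) : ℂ) else 0 := by
  induction N with
  | zero =>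
    intro α β hβ
    have hβ0 : β = 0 := by
      funext j
      simpa using (Finset.sum_eq_zero_iff.1 hβ) j (Finset.mem_univ j)
    subst hβ0
    simp only [Pi.zero_apply, pow_zero, Finset.prod_const_one, one_mul]
    split_ifs with hα
    · subst hα
      have : ∀ l : List (Fin n), derivList l 0 h = h := by
        intro l
        induction l with
        | nil => rfl
        | cons j l ih => exact ih
      simp [this, h0]
    · exact hflat α hα
  | succ N ih =>
    intro α β hβ
    obtain ⟨k, hk⟩ : ∃ k, β k ≠ 0 := by
      by_contra! hcon
      simp [hcon] at hβ
    have hle : Pi.single k 1 ≤ β := by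
      intro j
      by_cases hj : j = k
      · subst hj; simp; omega
      · simp [hj]
    obtain ⟨γ, rfl⟩ : ∃ γ : Fin n → ℕ, β = γ + Pi.single k 1 := ⟨β - Pi.single k 1, by
      rw [tsub_add_cancel_of_le hle]⟩
    have hγ : ∑ j, γ j = N := by
      simp only [Pi.add_apply, Finset.sum_add_distrib, Finset.sum_pi_single', Finset.mem_univ,
        if_true] at hβ
      simpa using hβ
    have hfun : (fun ξ : Fin n → ℝ => (∏ j, (ξ j : ℂ) ^ (γ + Pi.single k 1 : Fin n → ℕ) j) * h ξ) =
        fun ξ => (ξ k : ℂ) * ((∏ j, (ξ j : ℂ) ^ γ j) * h ξ) := by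
      funext ξ
      simp only [Pi.add_apply, pow_add, Finset.prod_mul_distrib]
      rw [show (∏ j, (ξ j : ℂ) ^ (Pi.single k 1 : Fin n → ℕ) j) = ξ k by
        rw [Finset.prod_eq_single k] <;> simp +contextual]
      ring
    rw [hfun, derivList_coord_mul (List.nodup_finRange n) α (contDiff_monomial_mul hh γ)
      (List.mem_finRange k)]
    simp only [Pi.zero_apply, Complex.ofReal_zero, zero_mul, zero_add]
    rw [ih _ γ hγ]
    by_cases hαk : α k = 0
    · have : α ≠ γ + Pi.single k 1 := by
        rintro rfl
        simp at hαk
      simp [hαk, this]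
    · have hle' : Pi.single k 1 ≤ α := by
        intro j
        by_cases hj : j = k
        · subst hj; simp; omega
        · simp [hj]
      obtain ⟨δ, rfl⟩ : ∃ δ : Fin n → ℕ, α = δ + Pi.single k 1 := ⟨α - Pi.single k 1, by
        rw [tsub_add_cancel_of_le hle']⟩
      simp only [add_tsub_cancel_right, add_left_inj, mul_ite, mul_zero]
      congr 1
      norm_cast
      rw [← Finset.mul_prod_erase _ _ (Finset.mem_univ k), ← mul_assoc]
      refine Eq.trans ?_ (Finset.mul_prod_erase Finset.univ
          (fun j => Nat.factorial ((δ + Pi.single k 1 : Fin n → ℕ) j)) (Finset.mem_univ k))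
      congr 1
      · simp [Nat.factorial_succ]
      · refine Finset.prod_congr rfl fun j hj => ?_
        simp [(Finset.mem_erase.1 hj).1]

/-! ### The Fourier–Laplace transform of a test function -/

lemma fourierLaplace_const_mul {n : ℕ} (c : ℂ) (h : (Fin n → ℝ) → ℂ) (z : Fin n → ℂ) :
    fourierLaplace (fun ξ => c * h ξ) z = c * fourierLaplace h z := by
  unfold fourierLaplace
  simp only [mul_assoc]
  rw [integral_const_mul]
  ring

lemma isTest_mul_exp {n : ℕ} {h : (Fin n → ℝ) → ℂ} (hh : IsTest h) (z : Fin n → ℂ) :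
    IsTest (fun ξ : Fin n → ℝ => h ξ * Complex.exp (Complex.I * ∑ j, z j * (ξ j : ℂ))) := by
  refine ⟨hh.1.mul (ContDiff.cexp (contDiff_const.mul (ContDiff.sum fun j _ => ?_))),
    hh.2.mul_right⟩
  exact contDiff_const.mul (Complex.ofRealCLM.contDiff.comp (contDiff_apply ℝ ℝ j))

lemma IsTest.integrable {n : ℕ} {h : (Fin n → ℝ) → ℂ} (hh : IsTest h) : Integrable h :=
  hh.1.continuous.integrable_of_hasCompactSupport hh.2

/-- Differentiation under the integral sign: `∂_j` becomes multiplication by `iξ_j`. -/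
lemma pderivC_fourierLaplace {n : ℕ} {h : (Fin n → ℝ) → ℂ} (hh : IsTest h) (j : Fin n) :
    pderivC j (fourierLaplace h) =
      fourierLaplace (fun ξ => (Complex.I * (ξ j : ℂ)) * h ξ) := by
  funext z
  let A : (Fin n → ℝ) → ((Fin n → ℂ) →L[ℂ] ℂ) := fun ξ =>
    Complex.I • ∑ i, (ξ i : ℂ) • ContinuousLinearMap.proj (R := ℂ) (φ := fun _ : Fin n => ℂ) i
  let F' : (Fin n → ℂ) → (Fin n → ℝ) → ((Fin n → ℂ) →L[ℂ] ℂ) := fun w ξ =>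
    (h ξ * Complex.exp (Complex.I * ∑ i, w i * (ξ i : ℂ))) • A ξ
  have hc : Continuous h := hh.1.continuous
  have hA : Continuous A := by fun_prop
  have hF' : Continuous (Function.uncurry F') := by
    unfold F'
    simp only [Function.uncurry_def]
    fun_prop
  -- The dominating function is the constant `C` on `tsupport h`, with `C` a bound for `F'` on the
  -- compact set `closedBall z 1 × tsupport h`.
  obtain ⟨C, hC⟩ := ((isCompact_closedBall z 1).prod hh.2.isCompact).exists_bound_of_continuousOn
    hF'.continuousOn
  have hzero : ∀ w ξ, ξ ∉ tsupport h → F' w ξ = 0 := by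
    intro w ξ hξ
    change (h ξ * _) • A ξ = 0
    rw [image_eq_zero_of_notMem_tsupport hξ, zero_mul]
    exact zero_smul ℂ (A ξ)
  have hF'z : Continuous (F' z) := hF'.comp (Continuous.prodMk_right z)
  have hF'int : Integrable (F' z) :=
    hF'z.integrable_of_hasCompactSupport (HasCompactSupport.intro hh.2.isCompact (hzero z))
  have key : HasFDerivAt (fun w : Fin n → ℂ =>
      ∫ ξ : Fin n → ℝ, h ξ * Complex.exp (Complex.I * ∑ i, w i * (ξ i : ℂ)))
      (∫ ξ, F' z ξ) z := by
    refine hasFDerivAt_integral_of_dominated_of_fderiv_le (𝕜 := ℂ)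
      (bound := (tsupport h).indicator fun _ => C)
      (Metric.ball_mem_nhds z one_pos) ?_ ?_ hF'z.aestronglyMeasurable ?_ ?_ ?_
    · exact Eventually.of_forall fun w => (isTest_mul_exp hh w).1.continuous.aestronglyMeasurable
    · exact (isTest_mul_exp hh z).integrable
    · refine Eventually.of_forall fun ξ w hw => ?_
      by_cases hξ : ξ ∈ tsupport h
      · rw [Set.indicator_of_mem hξ]
        exact hC (w, ξ) ⟨Metric.ball_subset_closedBall hw, hξ⟩
      · rw [Set.indicator_of_notMem hξ, hzero w ξ hξ, norm_zero]
    · refine (integrable_indicator_iff (isClosed_tsupport h).measurableSet).2 ?_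
      exact integrableOn_const hh.2.isCompact.measure_lt_top.ne
    · refine Eventually.of_forall fun ξ w _ => ?_
      have h1 : HasFDerivAt (fun w : Fin n → ℂ => Complex.I * ∑ i, w i * (ξ i : ℂ)) (A ξ) w := by
        have : (fun w : Fin n → ℂ => Complex.I * ∑ i, w i * (ξ i : ℂ)) = A ξ := by
          funext w
          simp [A, mul_comm]
        rw [this]
        exact (A ξ).hasFDerivAt
      have h2 := h1.cexp.const_mul (h ξ)
      simpa only [F', smul_smul] using h2
  unfold pderivC fourierLaplace
  rw [(key.const_mul _).fderiv]
  simp only [smul_apply, smul_eq_mul]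
  rw [ContinuousLinearMap.integral_apply hF'int]
  congr 2
  funext ξ
  simp [F', A, Pi.single_apply]
  ring

/-- Integration by parts: multiplication by `z_j` becomes `i∂_j`. -/
lemma coord_mul_fourierLaplace {n : ℕ} {h : (Fin n → ℝ) → ℂ} (hh : IsTest h) (j : Fin n)
    (z : Fin n → ℂ) :
    z j * fourierLaplace h z = Complex.I * fourierLaplace (pderivR j h) z := by
  have he : ∀ ξ : Fin n → ℝ, HasFDerivAt
      (fun ξ : Fin n → ℝ => Complex.exp (Complex.I * ∑ i, z i * (ξ i : ℂ)))
      (Complex.exp (Complex.I * ∑ i, z i * (ξ i : ℂ)) • (Complex.I • ∑ i, z i •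
        Complex.ofRealCLM.comp
          (ContinuousLinearMap.proj (R := ℝ) (φ := fun _ : Fin n => ℝ) i))) ξ := by
    intro ξ
    set A := (Complex.I • ∑ i, z i • Complex.ofRealCLM.comp
          (ContinuousLinearMap.proj (R := ℝ) (φ := fun _ : Fin n => ℝ) i)) with hA
    refine HasFDerivAt.cexp ?_
    have : (fun ξ : Fin n → ℝ => Complex.I * ∑ i, z i * (ξ i : ℂ)) = A := by
      funext w
      simp [A]
    rw [this]
    exact A.hasFDerivAt
  have hd : ∀ ξ : Fin n → ℝ, fderiv ℝ
      (fun ξ : Fin n → ℝ => Complex.exp (Complex.I * ∑ i, z i * (ξ i : ℂ))) ξ (Pi.single j 1) =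
      Complex.I * z j * Complex.exp (Complex.I * ∑ i, z i * (ξ i : ℂ)) := by
    intro ξ
    rw [(he ξ).fderiv]
    simp [Pi.single_apply, apply_ite]
    ring
  have hI := isTest_mul_exp hh z
  have parts := integral_mul_fderiv_eq_neg_fderiv_mul_of_integrable (𝕜 := ℂ) (μ := volume)
    (f := h) (g := fun ξ : Fin n → ℝ => Complex.exp (Complex.I * ∑ i, z i * (ξ i : ℂ)))
    (v := Pi.single j 1) (isTest_mul_exp (isTest_pderivR hh j) z).integrable
    (by
      simp only [hd]
      refine ((isTest_const_mul hI (Complex.I * z j)).integrable).congr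
        (Eventually.of_forall fun ξ => ?_)
      ring) hI.integrable
    (fun x _ => hh.1.differentiable (by simp) x)
    (fun x _ => (he x).differentiableAt)
  simp only [hd] at parts
  have h1 : ∫ ξ : Fin n → ℝ, h ξ * (Complex.I * z j *
      Complex.exp (Complex.I * ∑ i, z i * (ξ i : ℂ))) = (Complex.I * z j) *
      ∫ ξ : Fin n → ℝ, h ξ * Complex.exp (Complex.I * ∑ i, z i * (ξ i : ℂ)) := by
    rw [← integral_const_mul]
    congr 1
    funext ξ
    ring
  rw [h1] at parts
  unfold fourierLaplace pderivR
  linear_combination (-Complex.I * (((2 * Real.pi) ^ n : ℝ) : ℂ)⁻¹) * parts +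
    (z j * (((2 * Real.pi) ^ n : ℝ) : ℂ)⁻¹ *
      ∫ ξ : Fin n → ℝ, h ξ * Complex.exp (Complex.I * ∑ i, z i * (ξ i : ℂ))) * Complex.I_mul_I

/-- Fourier inversion at the origin. The shift by `iv` only multiplies `h` by `e^{-⟨v,ξ⟩}`,
which is `1` at the origin. -/
lemma integral_fourierLaplace {n : ℕ} {h : (Fin n → ℝ) → ℂ} (hh : IsTest h) (v : Fin n → ℝ) :
    ∫ u : Fin n → ℝ, fourierLaplace h (fun j => (u j : ℂ) + Complex.I * (v j : ℂ)) = h 0 := by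
  have hg := isTest_mul_exp hh (fun j => Complex.I * (v j : ℂ))
  set g : (Fin n → ℝ) → ℂ := fun ξ =>
    h ξ * Complex.exp (Complex.I * ∑ j, (Complex.I * (v j : ℂ)) * (ξ j : ℂ)) with hgdef
  -- The inversion theorem needs an inner product space, so `g` is transported to `EuclideanSpace`.
  let e : EuclideanSpace ℝ (Fin n) ≃L[ℝ] (Fin n → ℝ) := EuclideanSpace.equiv (Fin n) ℝ
  have hG1 : HasCompactSupport (g ∘ e) := hg.2.comp_homeomorph e.toHomeomorph
  have hG2 : ContDiff ℝ ∞ (g ∘ e) := hg.1.comp e.contDiff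
  let φ : SchwartzMap (EuclideanSpace ℝ (Fin n)) ℂ := hG1.toSchwartzMap hG2
  have hφ : ∀ x : EuclideanSpace ℝ (Fin n), φ x = g (fun j => x j) := fun x => rfl
  have hmp := PiLp.volume_preserving_toLp (Fin n)
  have hemb := (MeasurableEquiv.toLp 2 (Fin n → ℝ)).measurableEmbedding
  have hpt : ∀ u : EuclideanSpace ℝ (Fin n), fourierLaplace h (fun j => (u j : ℂ) + Complex.I * (v j : ℂ)) =
      (((2 * Real.pi) ^ n : ℝ) : ℂ)⁻¹ * (𝓕⁻ φ) ((2 * Real.pi)⁻¹ • u) := by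
    intro u
    unfold fourierLaplace
    congr 1
    rw [SchwartzMap.fourierInv_coe, Real.fourierInv_eq', ← hmp.integral_comp hemb]
    congr 1
    funext ξ
    rw [hφ, hgdef, smul_eq_mul]
    simp only
    rw [mul_left_comm, ← Complex.exp_add]
    congr 2
    rw [inner_smul_right, ← mul_assoc, mul_inv_cancel₀ (by positivity), one_mul]
    simp only [PiLp.inner_apply, RCLike.inner_apply, conj_trivial, Complex.ofReal_sum,
      Complex.ofReal_mul, Finset.mul_sum, Finset.sum_mul, ← Finset.sum_add_distrib]
    refine Finset.sum_congr rfl fun j _ => ?_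
    ring
  have h1 : ∫ u : Fin n → ℝ, fourierLaplace h (fun j => (u j : ℂ) + Complex.I * (v j : ℂ)) =
      ∫ u : EuclideanSpace ℝ (Fin n), fourierLaplace h (fun j => (u j : ℂ) + Complex.I * (v j : ℂ)) :=
    hmp.integral_comp hemb
      (fun u : EuclideanSpace ℝ (Fin n) => fourierLaplace h (fun j => (u j : ℂ) + Complex.I * (v j : ℂ)))
  -- The integral of `𝓕⁻ φ` is the value of `𝓕 (𝓕⁻ φ) = φ` at the origin.
  have h2 : ∫ x : EuclideanSpace ℝ (Fin n), (𝓕⁻ φ) x = φ 0 := by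
    have h3 : (𝓕 (𝓕⁻ φ)) 0 = φ 0 := by rw [FourierTransform.fourier_fourierInv_eq]
    rw [← h3, SchwartzMap.fourier_coe, Real.fourier_eq']
    simp
  rw [h1]
  simp_rw [hpt]
  rw [integral_const_mul, Measure.integral_comp_inv_smul_of_nonneg _ _ (by positivity), h2, hφ,
    finrank_euclideanSpace, Fintype.card_fin, Complex.real_smul, ← mul_assoc,
    inv_mul_cancel₀ (by norm_cast; positivity), one_mul]
  simp [hgdef, ← Pi.zero_def]

/-! ### Iterating over all coordinates -/

lemma pow_mul_fourierLaplace {n : ℕ} {h : (Fin n → ℝ) → ℂ} (hh : IsTest h) (j : Fin n)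
    (z : Fin n → ℂ) (m : ℕ) :
    z j ^ m * fourierLaplace h z = Complex.I ^ m * fourierLaplace ((pderivR j)^[m] h) z := by
  induction m with
  | zero => simp
  | succ m ih =>
    rw [pow_succ', mul_assoc, ih, mul_left_comm,
      coord_mul_fourierLaplace (isTest_iter_pderivR hh j m), Function.iterate_succ_apply']
    ring

lemma prod_mul_fourierLaplace {n : ℕ} {h : (Fin n → ℝ) → ℂ} (hh : IsTest h)
    (z : Fin n → ℂ) (α : Fin n → ℕ) (l : List (Fin n)) :
    (l.map fun j => z j ^ α j).prod * fourierLaplace h z =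
      (l.map fun j => Complex.I ^ α j).prod * fourierLaplace (derivList l α h) z := by
  induction l with
  | nil => simp [derivList]
  | cons j l ih =>
    simp only [List.map_cons, List.prod_cons]
    rw [mul_assoc, ih, mul_left_comm, pow_mul_fourierLaplace (isTest_derivList hh l α)]
    change _ = _ * fourierLaplace ((pderivR j)^[α j] (derivList l α h)) z
    ring

lemma isTest_monomial_mul {n : ℕ} {h : (Fin n → ℝ) → ℂ} (hh : IsTest h) (β : Fin n → ℕ)
    (l : List (Fin n)) :
    IsTest (fun ξ : Fin n → ℝ => (l.map fun j => (Complex.I * (ξ j : ℂ)) ^ β j).prod * h ξ) := by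
  refine ⟨ContDiff.mul ?_ hh.1, hh.2.mul_left⟩
  induction l with
  | nil => exact contDiff_const
  | cons j l ih =>
    simp only [List.map_cons, List.prod_cons]
    exact (ContDiff.pow (contDiff_const.mul
      (Complex.ofRealCLM.contDiff.comp (contDiff_apply ℝ ℝ j))) _).mul ih

lemma iter_pderivC_fourierLaplace {n : ℕ} {h : (Fin n → ℝ) → ℂ} (hh : IsTest h) (j : Fin n)
    (m : ℕ) :
    IsTest (fun ξ : Fin n → ℝ => (Complex.I * (ξ j : ℂ)) ^ m * h ξ) ∧
    (pderivC j)^[m] (fourierLaplace h) =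
      fourierLaplace (fun ξ => (Complex.I * (ξ j : ℂ)) ^ m * h ξ) := by
  induction m with
  | zero => simpa using hh
  | succ m ih =>
    constructor
    · simpa only [pow_succ', mul_assoc] using isTest_const_mul (isTest_coord_mul ih.1 j) Complex.I
    · rw [Function.iterate_succ_apply', ih.2, pderivC_fourierLaplace ih.1]
      simp only [pow_succ', mul_assoc]

lemma foldr_pderivC_fourierLaplace {n : ℕ} {h : (Fin n → ℝ) → ℂ} (hh : IsTest h)
    (β : Fin n → ℕ) (l : List (Fin n)) :
    l.foldr (fun j g => (pderivC j)^[β j] g) (fourierLaplace h) =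
      fourierLaplace
        (fun ξ => (l.map fun j => (Complex.I * (ξ j : ℂ)) ^ β j).prod * h ξ) := by
  induction l with
  | nil => simp
  | cons j l ih =>
    rw [List.foldr_cons, ih, (iter_pderivC_fourierLaplace (isTest_monomial_mul hh β l) j _).2]
    simp only [List.map_cons, List.prod_cons, mul_assoc]

lemma mderivC_fourierLaplace {n : ℕ} {h : (Fin n → ℝ) → ℂ} (hh : IsTest h) (β : Fin n → ℕ) :
    mderivC β (fourierLaplace h) = fun z =>
      Complex.I ^ (∑ j, β j) * fourierLaplace (fun ξ => (∏ j, (ξ j : ℂ) ^ β j) * h ξ) z := by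
  funext z
  rw [mderivC, foldr_pderivC_fourierLaplace hh, ← fourierLaplace_const_mul]
  congr 1
  funext ξ
  rw [← List.ofFn_eq_map, List.prod_ofFn, ← Finset.prod_pow_eq_pow_sum]
  simp only [mul_pow, Finset.prod_mul_distrib, mul_assoc]

/-- moment identities for the approximation kernel. For the Jackson
kernel `K` (with `K̂ ∈ C_c^∞` supported in the unit ball, even, `K̂(0) = 1`,
`∂^α K̂(0) = 0` for `α ≠ 0`), for all `u, v ∈ ℝⁿ` and all multi-indices `α, β`:
`∫_{ℝⁿ} (u+iv)^α ∂^β K(u+iv) du = (-1)^{|α|} α!` if `α = β` and `= 0` otherwise. -/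
theorem kernel_moment_identities (n : ℕ) (hn : 0 < n)
    (K : (Fin n → ℂ) → ℂ) (Khat : (Fin n → ℝ) → ℂ) (hK : IsJacksonKernel K Khat)
    (v : Fin n → ℝ) (α β : Fin n → ℕ) :
    ∫ u : Fin n → ℝ,
        (∏ j, ((u j : ℂ) + Complex.I * (v j : ℂ)) ^ α j) *
          mderivC β K (fun j => (u j : ℂ) + Complex.I * (v j : ℂ)) =
      if α = β then
        (-1 : ℂ) ^ (∑ j, α j) * ((∏ j, Nat.factorial (α j) : ℕ) : ℂ)
      else 0 := by
  obtain ⟨hsm, hsupp, -, h0, hflat, hKeq⟩ := hK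
  have hT : IsTest Khat := ⟨contDiff_infty.2 hsm,
    HasCompactSupport.intro (isCompact_closedBall 0 1) fun ξ hξ => hsupp ξ (by
      simpa using hξ)⟩
  obtain rfl : K = fourierLaplace Khat := funext hKeq
  have hT' : IsTest (fun ξ : Fin n → ℝ => (∏ j, (ξ j : ℂ) ^ β j) * Khat ξ) :=
    ⟨contDiff_monomial_mul hT.1 β, hT.2.mul_left⟩
  have hpt : ∀ z : Fin n → ℂ, (∏ j, z j ^ α j) * mderivC β (fourierLaplace Khat) z =
      Complex.I ^ (∑ j, α j + ∑ j, β j) * fourierLaplace (derivList (List.finRange n) α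
        (fun ξ => (∏ j, (ξ j : ℂ) ^ β j) * Khat ξ)) z := by
    intro z
    have := prod_mul_fourierLaplace hT' z α (List.finRange n)
    rw [← List.ofFn_eq_map, List.prod_ofFn, ← List.ofFn_eq_map, List.prod_ofFn,
      Finset.prod_pow_eq_pow_sum] at this
    rw [mderivC_fourierLaplace hT, mul_left_comm, this, pow_add]
    ring
  simp_rw [hpt]
  rw [integral_const_mul, integral_fourierLaplace (isTest_derivList hT' _ _),
    mderivR_monomial_mul_zero hT.1 h0 hflat _ α β rfl]
  split_ifs with hαβ
  · subst hαβ
    rw [← two_mul, pow_mul, Complex.I_sq]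
  · simp
end
end

section
/- Let λ > 1 and define P : [−1,1] → ℝ by P(0) = 0 and P(r) = ∫₀^r ∫₀^{s₆} ⋯ ∫₀^{s₂} (1 − ln|s₁|)^{−λ} ds₁ ⋯ ds₆ for 0 < |r| ≤ 1 (a six-fold iterated integral). Then: (i) P is six times continuously differentiable on [−1,1] with P^{(6)}(r) = (1 − ln|r|)^{−λ} for r ≠ 0 and P^{(6)}(0) = 0, and P ∈ C_{6,ϖ}([−1,1]) with the Logarithmic Hölder modulus ϖ(x) ∼ 1/(−ln x)^λ; (ii) for every 0 < ℓ ≤ 1 there is a constant c_{λ,ℓ} > 0 such that (1 − ln t)^{−λ} ≥ c_{λ,ℓ} t^ℓ for all t ∈ (0,1]; consequently |P^{(6)}(t) − P^{(6)}(0)| / t^ℓ = (1 − ln t)^{−λ}/t^ℓ → +∞ as t → 0⁺, so P^{(6)} is not Hölder continuous of any exponent ℓ ∈ (0,1] at 0, i.e., P ∉ C^{6+ℓ}([−1,1]) for any 0 < ℓ ≤ 1. -/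
/-!
The integrand `φ(s) = (1 - log |s|)^{-λ}`, `φ(0) = 0`, is continuous on `(-2, 2)`: its only other
singularities are at `|s| = e > 2`, and `1 - log |s| → ∞` as `s → 0`.  By the fundamental theorem of
calculus each integration adds one derivative on this open interval, so `P` is of class `C⁶` there
and its `m`-th derivative is the `(6 - m)`-fold iterated integral of `φ`.

Everything quantitative rests on `exists_mul_rpow_le`: `c t ^ ℓ ≤ (1 - log t)^{-λ}` on `(0, 1]`,
which is `1 + x ≤ exp x` in disguise.  Using it with exponent `ℓ / 2` gives the divergence of
`φ(t) / t ^ ℓ`.  Using it with `ℓ = 1` gives the logarithmic Hölder bound: for `0 ≤ a ≤ b` with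
`b - a ≤ h`, either `a ≤ h`, so `b ≤ 2h` and `φ(b)` alone is small enough, or `a > h`, where
Bernoulli's inequality gives `φ(b) - φ(a) ≤ λ (h / a) φ(b)` and `h / b` is absorbed by
`(1 + log (b / h))^{-λ}`.
-/

open Filter MeasureTheory

noncomputable section

/-- The integrand `(1 - ln|s|)^{-λ}` (set to `0` at `s = 0`). -/
def logIntegrand (lam : ℝ) : ℝ → ℝ := fun s =>
  if s = 0 then 0 else ((1 - Real.log |s|) ^ lam)⁻¹

/-- One antiderivative step `g ↦ (r ↦ ∫₀^r g)`. -/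
def iterInt (g : ℝ → ℝ) : ℝ → ℝ := fun r => ∫ s in (0:ℝ)..r, g s

/-- The six-fold iterated integral
`P(r) = ∫₀^r ∫₀^{s₆} ⋯ ∫₀^{s₂} (1 - ln|s₁|)^{-λ} ds₁ ⋯ ds₆`, with `P(0) = 0`. -/
def Pfun (lam : ℝ) : ℝ → ℝ := iterInt^[6] (logIntegrand lam)

/-! ### Comparison of logarithms with powers -/

lemma one_le_one_sub_log {t : ℝ} (h0 : 0 < t) (h1 : t ≤ 1) : 1 ≤ 1 - Real.log t := by
  linarith [Real.log_nonpos h0.le h1]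

lemma exists_mul_rpow_le {lam ℓ : ℝ} (hlam : 0 < lam) (hℓ : 0 < ℓ) :
    ∃ c > (0:ℝ), ∀ t ∈ Set.Ioc (0:ℝ) 1, c * t ^ ℓ ≤ ((1 - Real.log t) ^ lam)⁻¹ := by
  refine ⟨((lam / ℓ) ^ lam * Real.exp ℓ)⁻¹, by positivity, fun t ht => ?_⟩
  obtain ⟨h0, h1⟩ := ht
  have hz := one_le_one_sub_log h0 h1
  set z := 1 - Real.log t with hzdef
  have hz0 : 0 < z := by linarith
  -- `1 + x ≤ exp x` at `x = (ℓ / lam) z`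
  have hb : z ≤ lam / ℓ * Real.exp (ℓ / lam * z) := by
    have h := Real.add_one_le_exp (ℓ / lam * z)
    have h2 : lam / ℓ * (ℓ / lam * z) = z := by field_simp
    calc z = lam / ℓ * (ℓ / lam * z) := h2.symm
      _ ≤ _ := by gcongr; linarith
  have hp : z ^ lam ≤ (lam / ℓ) ^ lam * Real.exp (ℓ * z) := by
    calc z ^ lam ≤ (lam / ℓ * Real.exp (ℓ / lam * z)) ^ lam :=
          Real.rpow_le_rpow hz0.le hb hlam.le
      _ = _ := by
          rw [Real.mul_rpow (by positivity) (by positivity), ← Real.exp_mul]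
          congr 2
          field_simp
  have he : Real.exp (ℓ * z) * t ^ ℓ = Real.exp ℓ := by
    rw [Real.rpow_def_of_pos h0, ← Real.exp_add]
    congr 1
    rw [hzdef]; ring
  have hzl : 0 < z ^ lam := Real.rpow_pos_of_pos hz0 _
  rw [inv_mul_eq_div, div_le_iff₀ (by positivity), inv_mul_eq_div, le_div_iff₀ hzl]
  calc t ^ ℓ * z ^ lam ≤ t ^ ℓ * ((lam / ℓ) ^ lam * Real.exp (ℓ * z)) := by gcongr
    _ = (lam / ℓ) ^ lam * (Real.exp (ℓ * z) * t ^ ℓ) := by ring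
    _ = _ := by rw [he]

lemma tendsto_div_rpow_atTop {lam ℓ : ℝ} (hlam : 0 < lam) (hℓ : 0 < ℓ) :
    Tendsto (fun t : ℝ => ((1 - Real.log t) ^ lam)⁻¹ / t ^ ℓ)
      (nhdsWithin 0 (Set.Ioi 0)) atTop := by
  obtain ⟨c, hc, h⟩ := exists_mul_rpow_le (ℓ := ℓ / 2) hlam (by positivity)
  have ht : Tendsto (fun t : ℝ => c * t ^ (-(ℓ / 2))) (nhdsWithin 0 (Set.Ioi 0)) atTop :=
    (tendsto_rpow_neg_nhdsGT_zero (by linarith)).const_mul_atTop hc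
  refine tendsto_atTop_mono' _ ?_ ht
  filter_upwards [Ioc_mem_nhdsGT (zero_lt_one' ℝ)] with t ht
  have h0 := ht.1
  rw [le_div_iff₀ (by positivity), mul_assoc, ← Real.rpow_add h0,
    show -(ℓ / 2) + ℓ = ℓ / 2 by ring]
  exact h t ht

/-! ### Differentiability of the iterated integrals -/

/-- The interval may be any one inside `(-e, e)`; being open and containing `[-1, 1]`, it lets
`iteratedDeriv` be computed at the endpoints `±1` as well. -/
lemma continuousOn_logIntegrand {lam : ℝ} (hlam : 0 < lam) :
    ContinuousOn (logIntegrand lam) (Set.Ioo (-2) 2) := by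
  intro x hx
  apply ContinuousAt.continuousWithinAt
  by_cases h0 : x = 0
  · subst h0
    rw [← continuousWithinAt_compl_self]
    have hl : Tendsto (fun s : ℝ => 1 - Real.log |s|) (nhdsWithin 0 {0}ᶜ) atTop := by
      simp only [Real.log_abs, sub_eq_add_neg]
      exact tendsto_atTop_add_const_left _ _
        (tendsto_neg_atBot_atTop.comp Real.tendsto_log_nhdsNE_zero)
    have h2 := ((tendsto_rpow_atTop hlam).comp hl).inv_tendsto_atTop
    have h3 : logIntegrand lam 0 = 0 := by simp [logIntegrand]
    rw [ContinuousWithinAt, h3]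
    refine h2.congr' ?_
    filter_upwards [self_mem_nhdsWithin] with s hs
    simp only [Set.mem_compl_iff, Set.mem_singleton_iff] at hs
    simp [logIntegrand, hs]
  · have hpos : 0 < 1 - Real.log |x| := by
      have h1 : |x| < Real.exp 1 := by
        have : |x| < 2 := abs_lt.2 hx
        linarith [Real.exp_one_gt_d9]
      linarith [(Real.log_lt_iff_lt_exp (abs_pos.2 h0)).2 h1]
    have hc : ContinuousAt (fun s : ℝ => ((1 - Real.log |s|) ^ lam)⁻¹) x := by
      refine ContinuousAt.inv₀ ?_ (Real.rpow_pos_of_pos hpos _).ne'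
      refine ContinuousAt.rpow_const ?_ (Or.inl hpos.ne')
      exact continuousAt_const.sub (continuous_abs.continuousAt.log (abs_pos.2 h0).ne')
    refine hc.congr ?_
    filter_upwards [isOpen_ne.mem_nhds h0] with s hs
    simp [logIntegrand, show s ≠ 0 from hs]

lemma hasDerivAt_iterInt {g : ℝ → ℝ} (hg : ContinuousOn g (Set.Ioo (-2) 2)) {r : ℝ}
    (hr : r ∈ Set.Ioo (-2:ℝ) 2) : HasDerivAt (iterInt g) (g r) r := by
  have hsub : Set.uIcc 0 r ⊆ Set.Ioo (-2:ℝ) 2 :=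
    Set.OrdConnected.uIcc_subset inferInstance (by norm_num) hr
  exact intervalIntegral.integral_hasDerivAt_right
    ((hg.mono hsub).intervalIntegrable)
    (hg.stronglyMeasurableAtFilter isOpen_Ioo r hr)
    (hg.continuousAt (isOpen_Ioo.mem_nhds hr))

lemma continuousOn_iterate_iterInt {g : ℝ → ℝ} (hg : ContinuousOn g (Set.Ioo (-2) 2)) (n : ℕ) :
    ContinuousOn (iterInt^[n] g) (Set.Ioo (-2) 2) := by
  induction n with
  | zero => exact hg
  | succ n ih =>
    rw [Function.iterate_succ_apply']
    exact fun r hr => (hasDerivAt_iterInt ih hr).continuousAt.continuousWithinAt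

lemma contDiffOn_iterate_iterInt {g : ℝ → ℝ} (hg : ContinuousOn g (Set.Ioo (-2) 2)) (n : ℕ) :
    ContDiffOn ℝ n (iterInt^[n] g) (Set.Ioo (-2) 2) := by
  induction n with
  | zero => simpa using hg
  | succ n ih =>
    rw [Function.iterate_succ_apply']
    have hd := fun r hr => hasDerivAt_iterInt (continuousOn_iterate_iterInt hg n) (r := r) hr
    push_cast
    rw [contDiffOn_succ_iff_deriv_of_isOpen isOpen_Ioo]
    exact ⟨fun r hr => (hd r hr).differentiableAt.differentiableWithinAt, by simp,
      ih.congr fun r hr => (hd r hr).deriv⟩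

lemma iteratedDeriv_iterate_iterInt {g : ℝ → ℝ} (hg : ContinuousOn g (Set.Ioo (-2) 2)) (m k : ℕ) :
    Set.EqOn (iteratedDeriv m (iterInt^[k + m] g)) (iterInt^[k] g) (Set.Ioo (-2) 2) := by
  induction m generalizing k with
  | zero => intro r _; simp
  | succ m ih =>
    intro r hr
    rw [iteratedDeriv_succ, show k + (m + 1) = (k + 1) + m by ring]
    have h : iteratedDeriv m (iterInt^[k + 1 + m] g) =ᶠ[nhds r] iterInt^[k + 1] g :=
      (ih (k + 1)).eventuallyEq_of_mem (isOpen_Ioo.mem_nhds hr)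
    rw [h.deriv_eq, Function.iterate_succ_apply']
    exact (hasDerivAt_iterInt (continuousOn_iterate_iterInt hg k) hr).deriv

/-! ### The logarithmic Hölder bound -/

/-- The logarithmic Hölder bound at two points `0 < a ≤ b` farther from the origin than the
admissible gap `h`; `c` is the constant of `exists_mul_rpow_le` for the exponent `1`. -/
lemma sub_le_of_gap_lt {lam c a b h : ℝ} (hlam : 1 < lam) (hc : 0 < c)
    (H : ∀ t ∈ Set.Ioc (0:ℝ) 1, c * t ≤ ((1 - Real.log t) ^ lam)⁻¹)
    (hh : 0 < h) (hh2 : h ≤ 1 / 2) (ha : h < a) (hab : a ≤ b) (hb : b ≤ 1) (hgap : b - a ≤ h) :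
    ((1 - Real.log b) ^ lam)⁻¹ - ((1 - Real.log a) ^ lam)⁻¹ ≤
      2 * lam / c * ((-Real.log h) ^ lam)⁻¹ := by
  have ha0 : 0 < a := by linarith
  have hb0 : 0 < b := by linarith
  have hLa := one_le_one_sub_log ha0 (hab.trans hb)
  have hLb := one_le_one_sub_log hb0 hb
  have hlogh : 0 < -Real.log h := by linarith [Real.log_neg hh (by linarith)]
  have hlogab : Real.log b - Real.log a ≤ h / a := by
    rw [← Real.log_div hb0.ne' ha0.ne']
    have h1 := Real.log_le_sub_one_of_pos (show 0 < b / a by positivity)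
    have h2 : b / a - 1 = (b - a) / a := by field_simp
    calc Real.log (b / a) ≤ (b - a) / a := by rw [← h2]; exact h1
      _ ≤ h / a := by gcongr
  have hloglog : Real.log a ≤ Real.log b := Real.log_le_log ha0 hab
  have hlogbh : Real.log (h / b) = Real.log h - Real.log b := Real.log_div hh.ne' hb0.ne'
  have hhb : h / b ≤ 1 := (div_le_one hb0).2 (by linarith)
  have hLhb := one_le_one_sub_log (show 0 < h / b by positivity) hhb
  have HH := H (h / b) ⟨by positivity, hhb⟩
  set A := 1 - Real.log a with hA
  set B := 1 - Real.log b with hB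
  set D := 1 - Real.log (h / b) with hD
  have hA0 : 0 < A := by linarith
  have hB0 : 0 < B := by linarith
  have hD0 : 0 < D := by linarith
  -- Bernoulli's inequality for `B / A = 1 - (A - B) / A`
  have bern : 1 - lam * (h / a) ≤ (B / A) ^ lam := by
    have h0 : B / A = 1 + (B / A - 1) := by ring
    have h1 := one_add_mul_self_le_rpow_one_add
      (s := B / A - 1) (by have : 0 < B / A := by positivity
                           linarith) hlam.le
    rw [← h0] at h1
    refine le_trans ?_ h1
    have h3 : -(h / a) ≤ B / A - 1 := by
      have h4 : B / A - 1 = -((A - B) / A) := by field_simp; ring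
      have h5 : (A - B) / A ≤ A - B := div_le_self (by linarith) hLa
      rw [h4]; linarith
    nlinarith
  have hstep : (B ^ lam)⁻¹ - (A ^ lam)⁻¹ ≤ lam * (h / a) * (B ^ lam)⁻¹ := by
    have hBl : 0 < B ^ lam := Real.rpow_pos_of_pos hB0 _
    have hAl : 0 < A ^ lam := Real.rpow_pos_of_pos hA0 _
    rw [Real.div_rpow hB0.le hA0.le] at bern
    have h1 : (A ^ lam)⁻¹ = B ^ lam / A ^ lam * (B ^ lam)⁻¹ := by field_simp
    rw [h1]
    have := mul_le_mul_of_nonneg_right bern (inv_pos.2 hBl).le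
    linarith
  have hha : h / a ≤ 2 * (h / b) := by
    rw [div_le_iff₀ ha0]
    have : h = h / b * b := by field_simp
    have h2 : 0 < h / b := by positivity
    nlinarith
  have hhb2 : h / b ≤ (D ^ lam)⁻¹ / c := by
    rw [le_div_iff₀ hc]; linarith
  have hBD : (D ^ lam)⁻¹ * (B ^ lam)⁻¹ ≤ ((-Real.log h) ^ lam)⁻¹ := by
    rw [← mul_inv, ← Real.mul_rpow hD0.le hB0.le]
    apply inv_anti₀ (Real.rpow_pos_of_pos hlogh _)
    apply Real.rpow_le_rpow hlogh.le _ (by linarith)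
    -- `D, B ≥ 1` give `D * B ≥ D + B - 1 = 1 - log h`
    nlinarith
  have hBi : 0 ≤ (B ^ lam)⁻¹ := (inv_pos.2 (Real.rpow_pos_of_pos hB0 _)).le
  calc (B ^ lam)⁻¹ - (A ^ lam)⁻¹ ≤ lam * (h / a) * (B ^ lam)⁻¹ := hstep
    _ ≤ lam * (2 * ((D ^ lam)⁻¹ / c)) * (B ^ lam)⁻¹ := by
        gcongr
        linarith
    _ = 2 * lam / c * ((D ^ lam)⁻¹ * (B ^ lam)⁻¹) := by ring
    _ ≤ _ := by gcongr

lemma logIntegrand_nonneg {lam s : ℝ} (hs : |s| ≤ 1) : 0 ≤ logIntegrand lam s := by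
  unfold logIntegrand
  split_ifs with h
  · exact le_rfl
  · have := one_le_one_sub_log (abs_pos.2 h) hs
    exact inv_nonneg.2 (Real.rpow_nonneg (by linarith) _)

lemma logIntegrand_mono {lam s t : ℝ} (hlam : 0 < lam) (hst : |s| ≤ |t|) (ht : |t| ≤ 1) :
    logIntegrand lam s ≤ logIntegrand lam t := by
  by_cases hs0 : s = 0
  · rw [show logIntegrand lam s = 0 by simp [logIntegrand, hs0]]
    exact logIntegrand_nonneg ht
  · have hs := abs_pos.2 hs0
    have ht0 : t ≠ 0 := abs_pos.1 (hs.trans_le hst)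
    simp only [logIntegrand, hs0, ht0, if_false]
    have h1 := one_le_one_sub_log (abs_pos.2 ht0) ht
    have h2 := Real.log_le_log hs hst
    apply inv_anti₀ (Real.rpow_pos_of_pos (by linarith) _)
    exact Real.rpow_le_rpow (by linarith) (by linarith) hlam.le

/-- The logarithmic Hölder bound in terms of `|s| ≤ |t|`, which suffices because the integrand is
even; points of opposite sign satisfy `|t| - |s| ≤ |t - s|`. -/
lemma logIntegrand_sub_le {lam c s t h : ℝ} (hlam : 1 < lam) (hc : 0 < c)
    (H : ∀ t ∈ Set.Ioc (0:ℝ) 1, c * t ≤ ((1 - Real.log t) ^ lam)⁻¹)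
    (hh : 0 < h) (hh2 : h ≤ 1 / 2) (hst : |s| ≤ |t|) (ht : |t| ≤ 1) (hgap : |t| - |s| ≤ h) :
    logIntegrand lam t - logIntegrand lam s ≤
      (1 + 2 * lam / c) * ((-Real.log h) ^ lam)⁻¹ := by
  have hlogh : 0 < -Real.log h := by linarith [Real.log_neg hh (by linarith)]
  have hR : 0 < ((-Real.log h) ^ lam)⁻¹ := inv_pos.2 (Real.rpow_pos_of_pos hlogh _)
  have hC : 0 < 2 * lam / c := by positivity
  rcases le_or_gt |s| h with hs | hs
  · have h0 := logIntegrand_nonneg (lam := lam) (hst.trans ht)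
    have h1 : logIntegrand lam t ≤ ((-Real.log h) ^ lam)⁻¹ := by
      by_cases ht0 : t = 0
      · simpa [logIntegrand, ht0] using hR.le
      · simp only [logIntegrand, ht0, if_false]
        -- `|t| ≤ 2h`, and the factor `2` costs only `log 2 < 1`
        have h2 := Real.log_le_log (abs_pos.2 ht0) (show |t| ≤ 2 * h by linarith)
        rw [Real.log_mul two_ne_zero hh.ne'] at h2
        have h3 := Real.log_two_lt_d9
        apply inv_anti₀ (Real.rpow_pos_of_pos hlogh _)
        exact Real.rpow_le_rpow hlogh.le (by linarith) (by linarith)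
    nlinarith
  · have hs0 : s ≠ 0 := abs_pos.1 (hh.trans hs)
    have ht0 : t ≠ 0 := abs_pos.1 ((hh.trans hs).trans_le hst)
    have h1 := sub_le_of_gap_lt hlam hc H hh hh2 hs hst ht hgap
    simp only [logIntegrand, hs0, ht0, if_false]
    nlinarith

/-- the explicit example of Logarithmic Hölder type. For `λ > 1`:
(i) `P` is six times continuously differentiable on `[-1,1]`, `P⁽⁶⁾(r) = (1-ln|r|)^{-λ}`
for `r ≠ 0`, `P⁽⁶⁾(0) = 0`, and `P ∈ C_{6,ϖ}([-1,1])` with `ϖ(x) ∼ 1/(-ln x)^λ`;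
(ii) for every `0 < ℓ ≤ 1` there is `c_{λ,ℓ} > 0` with `(1-ln t)^{-λ} ≥ c_{λ,ℓ} t^ℓ` on
`(0,1]`, and `(1-ln t)^{-λ}/t^ℓ → +∞` as `t → 0⁺`; hence `P⁽⁶⁾` is not Hölder continuous
of any exponent at `0`, i.e. `P ∉ C^{6+ℓ}([-1,1])` for every `0 < ℓ ≤ 1`. -/
theorem explicit_log_holder_example (lam : ℝ) (hlam : 1 < lam) :
    -- (i)
    (ContDiffOn ℝ 6 (Pfun lam) (Set.Icc (-1) 1) ∧
      (∀ r ∈ Set.Icc (-1:ℝ) 1, r ≠ 0 →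
        iteratedDeriv 6 (Pfun lam) r = ((1 - Real.log |r|) ^ lam)⁻¹) ∧
      iteratedDeriv 6 (Pfun lam) 0 = 0 ∧
      ∃ C > (0:ℝ),
        (∀ m ≤ 6, ∀ r ∈ Set.Icc (-1:ℝ) 1, |iteratedDeriv m (Pfun lam) r| ≤ C) ∧
        (∀ s ∈ Set.Icc (-1:ℝ) 1, ∀ t ∈ Set.Icc (-1:ℝ) 1,
          0 < |s - t| → |s - t| ≤ 1/2 →
          |iteratedDeriv 6 (Pfun lam) s - iteratedDeriv 6 (Pfun lam) t| ≤
            C * ((-Real.log |s - t|) ^ lam)⁻¹)) ∧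
    -- (ii)
    (∀ ℓ : ℝ, 0 < ℓ → ℓ ≤ 1 →
      (∃ c > (0:ℝ), ∀ t ∈ Set.Ioc (0:ℝ) 1, c * t ^ ℓ ≤ ((1 - Real.log t) ^ lam)⁻¹) ∧
      Tendsto (fun t : ℝ => ((1 - Real.log t) ^ lam)⁻¹ / t ^ ℓ)
        (nhdsWithin 0 (Set.Ioi 0)) atTop) := by
  have hl0 : 0 < lam := by linarith
  have hg := continuousOn_logIntegrand hl0
  have hsub : Set.Icc (-1:ℝ) 1 ⊆ Set.Ioo (-2) 2 :=
    Set.Icc_subset_Ioo (by norm_num) (by norm_num)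
  have h6 : ∀ r ∈ Set.Icc (-1:ℝ) 1, iteratedDeriv 6 (Pfun lam) r = logIntegrand lam r :=
    fun r hr => iteratedDeriv_iterate_iterInt hg 6 0 (hsub hr)
  refine ⟨⟨(contDiffOn_iterate_iterInt hg 6).mono hsub, ?_, ?_, ?_⟩, ?_⟩
  · intro r hr hr0
    rw [h6 r hr]
    simp [logIntegrand, hr0]
  · rw [h6 0 (by norm_num)]
    simp [logIntegrand]
  · have hbd : ∀ k, ∃ K, ∀ r ∈ Set.Icc (-1:ℝ) 1, |iterInt^[k] (logIntegrand lam) r| ≤ K :=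
      fun k => isCompact_Icc.exists_bound_of_continuousOn
        ((continuousOn_iterate_iterInt hg k).mono hsub)
    choose K hK using hbd
    have hK0 : ∀ k, 0 ≤ K k := fun k => (abs_nonneg _).trans (hK k 0 (by norm_num))
    obtain ⟨c, hc, H⟩ := exists_mul_rpow_le (ℓ := 1) hl0 one_pos
    simp only [Real.rpow_one] at H
    have hS : 0 ≤ ∑ k ∈ Finset.range 7, K k := Finset.sum_nonneg fun k _ => hK0 k
    have hC : 0 < 2 * lam / c := by positivity
    refine ⟨(1 + 2 * lam / c) + ∑ k ∈ Finset.range 7, K k, by linarith, ?_, ?_⟩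
    · intro m hm r hr
      have he := iteratedDeriv_iterate_iterInt hg m (6 - m) (hsub hr)
      rw [Nat.sub_add_cancel hm] at he
      have h1 := hK (6 - m) r hr
      rw [← he] at h1
      have h2 : K (6 - m) ≤ ∑ k ∈ Finset.range 7, K k :=
        Finset.single_le_sum (fun k _ => hK0 k) (Finset.mem_range.2 (by omega))
      exact h1.trans (by linarith)
    · intro s hs t ht hpos hle
      have hR : 0 < ((-Real.log |s - t|) ^ lam)⁻¹ :=
        inv_pos.2 (Real.rpow_pos_of_pos (by linarith [Real.log_neg hpos (by linarith)]) _)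
      rw [h6 s hs, h6 t ht]
      have key : |logIntegrand lam s - logIntegrand lam t| ≤
          (1 + 2 * lam / c) * ((-Real.log |s - t|) ^ lam)⁻¹ := by
        rcases le_total |s| |t| with hst | hst
        · have ht1 := abs_le.2 ht
          rw [abs_sub_comm, abs_of_nonneg (by linarith [logIntegrand_mono hl0 hst ht1])]
          refine logIntegrand_sub_le hlam hc H hpos hle hst ht1 ?_
          rw [abs_sub_comm]
          exact abs_sub_abs_le_abs_sub t s
        · have hs1 := abs_le.2 hs
          rw [abs_of_nonneg (by linarith [logIntegrand_mono hl0 hst hs1])]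
          exact logIntegrand_sub_le hlam hc H hpos hle hst hs1 (abs_sub_abs_le_abs_sub s t)
      exact key.trans (mul_le_mul_of_nonneg_right (by linarith) hR.le)
  · exact fun ℓ hℓ _ => ⟨exists_mul_rpow_le hl0 hℓ, tendsto_div_rpow_atTop hl0 hℓ⟩
end
end
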